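/- arXiv:2311.10006 — 4 statements merged into one kernel-verified Lean document; each statement's English description precedes it below -/
import Mathlib

section
/- Let d ≥ 1, α > 0, and let φ be a Schwartz function on ℝ^d. Define v(t,x) := (V_t φ)(x) = -α ln((P_t e^{-φ/α})(x)). Then v(0,·) = φ, v is smooth on (0,∞) × ℝ^d, and v solves the Hamilton–Jacobi equation ∂_t v(t,x) = (α/2) Δv(t,x) - (1/2) |∇v(t,x)|² for all t > 0 and x ∈ ℝ^d. -/
open MeasureTheory Real Filter Set

noncomputable section

/-- Euclidean space `ℝ^d`. -/
abbrev Euc (d : ℕ) := EuclideanSpace ℝ (Fin d)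

/-- The heat semigroup `P_t` with generator `(α/2)Δ`: for `t > 0` it is given by
convolution with the Gaussian kernel of variance `αt`, and `P_0 f = f`. -/
def heatP (d : ℕ) (α t : ℝ) (f : Euc d → ℝ) (x : Euc d) : ℝ :=
  if t = 0 then f x
  else ∫ y : Euc d, (2 * π * α * t) ^ (-(d : ℝ) / 2) *
    Real.exp (-‖x - y‖ ^ 2 / (2 * α * t)) * f y

/-- The Laplacian of `f : ℝ^d → ℝ`, as the sum of the second partial derivatives in the
coordinate directions. -/
def lap (d : ℕ) (f : Euc d → ℝ) (x : Euc d) : ℝ :=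
  ∑ i : Fin d, fderiv ℝ (fun y => fderiv ℝ f y (EuclideanSpace.single i 1)) x
    (EuclideanSpace.single i 1)

/-- The Cole–Hopf transform `V_t φ = -α ln (P_t e^{-φ/α})`. -/
def coleHopf (d : ℕ) (α t : ℝ) (φ : Euc d → ℝ) (x : Euc d) : ℝ :=
  -α * Real.log (heatP d α t (fun y => Real.exp (-φ y / α)) x)

/-- A tempered measure: a locally finite Borel measure integrating every Schwartz function. -/
def IsTempered {d : ℕ} (μ : Measure (Euc d)) : Prop :=
  IsLocallyFiniteMeasure μ ∧ ∀ φ : SchwartzMap (Euc d) ℝ, Integrable (fun x => φ x) μ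

/-- The Gaussian measure on `ℝ^d` with mean `m` and covariance `t • Id`, defined through its
density with respect to Lebesgue measure. -/
def gaussE (d : ℕ) (m : Euc d) (t : ℝ) : Measure (Euc d) :=
  volume.withDensity fun x =>
    ENNReal.ofReal ((2 * π * t) ^ (-(d : ℝ) / 2) * Real.exp (-‖x - m‖ ^ 2 / (2 * t)))

/-- The unit cube `[0,1]^d`. -/
def unitCube (d : ℕ) : Set (Euc d) := {x | ∀ i, x i ∈ Set.Icc (0 : ℝ) 1}

/-- First-order partial derivative in direction `i`. -/
def pderivI {d : ℕ} (i : Fin d) (f : Euc d → ℝ) (x : Euc d) : ℝ :=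
  fderiv ℝ f x (EuclideanSpace.single i 1)

/-- Iterated partial derivative in direction `i`. -/
def pderivIter {d : ℕ} (i : Fin d) : ℕ → (Euc d → ℝ) → Euc d → ℝ
  | 0, f => f
  | n + 1, f => pderivI i (pderivIter i n f)

/-- The partial derivative `D^β` for a multi-index `β`. -/
def Dmulti {d : ℕ} (β : Fin d → ℕ) (f : Euc d → ℝ) : Euc d → ℝ :=
  (List.finRange d).foldr (fun i g => pderivIter i (β i) g) f

/-- Linear exponent: `(a, ξ) ↦ ⟪y, ξ⟫ - a |y|²`. -/
def Lin {d : ℕ} (y : Euc d) : (ℝ × Euc d) →L[ℝ] ℝ :=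
  (innerSL ℝ y).comp (ContinuousLinearMap.snd ℝ ℝ (Euc d))
    - (‖y‖ ^ 2) • ContinuousLinearMap.fst ℝ ℝ (Euc d)

lemma Lin_apply {d : ℕ} (y : Euc d) (p : ℝ × Euc d) :
    Lin y p = inner ℝ y p.2 - ‖y‖ ^ 2 * p.1 := by
  simp [Lin]

lemma Lin_continuous {d : ℕ} : Continuous (fun y : Euc d => Lin y) := by
  unfold Lin
  have h : Continuous (fun y : Euc d => innerSL ℝ y) := (innerSL ℝ).continuous
  fun_prop

lemma Lin_norm_le {d : ℕ} (y : Euc d) : ‖Lin y‖ ≤ 2 * Real.exp ‖y‖ := by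
  have h1 : ‖Lin y‖ ≤ ‖y‖ + ‖y‖ ^ 2 := by
    refine ContinuousLinearMap.opNorm_le_bound _ (by positivity) fun p => ?_
    rw [Lin_apply]
    have h2 : ‖p.2‖ ≤ ‖p‖ := norm_snd_le p
    have h3 : ‖p.1‖ ≤ ‖p‖ := norm_fst_le p
    calc ‖inner ℝ y p.2 - ‖y‖ ^ 2 * p.1‖ ≤ ‖inner ℝ y p.2‖ + ‖‖y‖ ^ 2 * p.1‖ := norm_sub_le _ _
      _ ≤ ‖y‖ * ‖p.2‖ + ‖y‖ ^ 2 * ‖p.1‖ := by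
          gcongr
          · exact norm_inner_le_norm y p.2
          · rw [norm_mul]; simp
      _ ≤ ‖y‖ * ‖p‖ + ‖y‖ ^ 2 * ‖p‖ := by gcongr
      _ = _ := by ring
  have h2 := Real.quadratic_le_exp_of_nonneg (norm_nonneg y)
  nlinarith [norm_nonneg y]

/-- Admissible weights. -/
def Good {d : ℕ} {F : Type} [NormedAddCommGroup F] (w : Euc d → F) : Prop :=
  AEStronglyMeasurable w volume ∧
    ∀ c b : ℝ, 0 < b → Integrable (fun y => Real.exp (c * ‖y‖ - b * ‖y‖ ^ 2) * ‖w y‖) volume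

/-- Laplace type transform. -/
def FT {d : ℕ} {F : Type} [NormedAddCommGroup F] [NormedSpace ℝ F] (w : Euc d → F)
    (p : ℝ × Euc d) : F := ∫ y, Real.exp (Lin y p) • w y

lemma Good.of_le {d : ℕ} {F G : Type} [NormedAddCommGroup F] [NormedAddCommGroup G]
    {w : Euc d → F} (hw : Good w) {w' : Euc d → G} (hm : AEStronglyMeasurable w' volume)
    (C : ℝ) (h : ∀ y, ‖w' y‖ ≤ C * Real.exp ‖y‖ * ‖w y‖) : Good w' := by
  refine ⟨hm, fun c b hb => ?_⟩
  refine ((hw.2 (c + 1) b hb).const_mul C).mono' ?_ ?_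
  · have : Continuous (fun y : Euc d => Real.exp (c * ‖y‖ - b * ‖y‖ ^ 2)) := by fun_prop
    exact this.aestronglyMeasurable.mul hm.norm
  · refine Eventually.of_forall fun y => ?_
    rw [norm_mul, norm_norm, Real.norm_of_nonneg (Real.exp_nonneg _)]
    calc _ ≤ Real.exp (c * ‖y‖ - b * ‖y‖ ^ 2) * (C * Real.exp ‖y‖ * ‖w y‖) := by
          gcongr; exact h y
      _ = C * ((Real.exp (c * ‖y‖ - b * ‖y‖ ^ 2) * Real.exp ‖y‖) * ‖w y‖) := by ring
      _ = _ := by rw [← Real.exp_add]; ring_nf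

lemma Lin_exp_le {d : ℕ} (y : Euc d) (p : ℝ × Euc d) {c b : ℝ} (hc : ‖p.2‖ ≤ c) (hb : b ≤ p.1) :
    Real.exp (Lin y p) ≤ Real.exp (c * ‖y‖ - b * ‖y‖ ^ 2) := by
  apply Real.exp_le_exp.2
  rw [Lin_apply]
  have h1 := real_inner_le_norm y p.2
  have h2 : ‖y‖ * ‖p.2‖ ≤ ‖y‖ * c := by gcongr
  have h3 : ‖y‖ ^ 2 * b ≤ ‖y‖ ^ 2 * p.1 := by gcongr
  linarith

lemma Good.integrable {d : ℕ} {F : Type} [NormedAddCommGroup F] [NormedSpace ℝ F]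
    {w : Euc d → F} (hw : Good w) {p : ℝ × Euc d} (hp : 0 < p.1) :
    Integrable (fun y => Real.exp (Lin y p) • w y) volume := by
  have hc : Continuous (fun y : Euc d => Real.exp (Lin y p)) := by
    have := Lin_continuous (d := d)
    fun_prop
  refine (hw.2 ‖p.2‖ p.1 hp).mono' (hc.aestronglyMeasurable.smul hw.1) ?_
  refine Eventually.of_forall fun y => ?_
  rw [norm_smul, Real.norm_of_nonneg (Real.exp_nonneg _)]
  gcongr ?_ * _
  exact Lin_exp_le y p le_rfl le_rfl

/-- The weight of the derivative. -/
def dW {d : ℕ} {F : Type} [NormedAddCommGroup F] [NormedSpace ℝ F] (w : Euc d → F) (y : Euc d) :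
    (ℝ × Euc d) →L[ℝ] F := (Lin y).smulRight (w y)

lemma Good.dW {d : ℕ} {F : Type} [NormedAddCommGroup F] [NormedSpace ℝ F]
    {w : Euc d → F} (hw : Good w) : Good (dW w) := by
  refine hw.of_le ?_ 2 fun y => ?_
  · unfold _root_.dW
    exact (ContinuousLinearMap.smulRightL ℝ (ℝ × Euc d) F).aestronglyMeasurable_comp₂
      Lin_continuous.aestronglyMeasurable hw.1
  · rw [_root_.dW, ContinuousLinearMap.norm_smulRight_apply]
    gcongr
    exact Lin_norm_le y

lemma Good.hasFDerivAt {d : ℕ} {F : Type} [NormedAddCommGroup F] [NormedSpace ℝ F]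
    {w : Euc d → F} (hw : Good w) {p : ℝ × Euc d} (hp : 0 < p.1) :
    HasFDerivAt (FT w) (FT (_root_.dW w) p) p := by
  have hc : ∀ q : ℝ × Euc d, Continuous (fun y : Euc d => Real.exp (Lin y q)) := fun q => by
    have := Lin_continuous (d := d)
    fun_prop
  set s : Set (ℝ × Euc d) := {q | p.1 / 2 < q.1 ∧ ‖q.2‖ < ‖p.2‖ + 1} with hs
  have hso : IsOpen s := by
    have h1 : IsOpen {q : ℝ × Euc d | p.1 / 2 < q.1} := isOpen_lt (by fun_prop) (by fun_prop)
    have h2 : IsOpen {q : ℝ × Euc d | ‖q.2‖ < ‖p.2‖ + 1} := isOpen_lt (by fun_prop) (by fun_prop)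
    exact h1.inter h2
  have hps : p ∈ s := ⟨by linarith, by linarith⟩
  unfold FT
  refine hasFDerivAt_integral_of_dominated_of_fderiv_le (𝕜 := ℝ)
    (bound := fun y => Real.exp ((‖p.2‖ + 1) * ‖y‖ - (p.1 / 2) * ‖y‖ ^ 2) * ‖_root_.dW w y‖)
    (F' := fun q y => Real.exp (Lin y q) • _root_.dW w y)
    (hso.mem_nhds hps) ?_ (hw.integrable hp) (hw.dW.integrable hp).1 ?_
    (hw.dW.2 _ _ (by linarith)) ?_
  · exact Eventually.of_forall fun q => (hc q).aestronglyMeasurable.smul hw.1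
  · refine Eventually.of_forall fun y q hq => ?_
    rw [norm_smul, Real.norm_of_nonneg (Real.exp_nonneg _)]
    gcongr ?_ * _
    exact Lin_exp_le y q hq.2.le hq.1.le
  · refine Eventually.of_forall fun y q hq => ?_
    have h := ((Lin y).hasFDerivAt (x := q)).exp.smul_const (w y)
    convert h using 1
    ext z <;> simp [_root_.dW, smul_smul]

lemma isOpen_U (d : ℕ) : IsOpen (Set.Ioi (0 : ℝ) ×ˢ (Set.univ : Set (Euc d))) :=
  isOpen_Ioi.prod isOpen_univ

lemma FT_contDiffOn_nat {d : ℕ} (n : ℕ) : ∀ {F : Type} [NormedAddCommGroup F] [NormedSpace ℝ F]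
    {w : Euc d → F}, Good w →
    ContDiffOn ℝ (n : WithTop ℕ∞) (FT w) (Set.Ioi (0 : ℝ) ×ˢ Set.univ) := by
  induction n with
  | zero =>
    intro F _ _ w hw
    rw [Nat.cast_zero, contDiffOn_zero]
    exact fun p hp => (hw.hasFDerivAt hp.1).continuousAt.continuousWithinAt
  | succ n ih =>
    intro F _ _ w hw
    rw [Nat.cast_succ, contDiffOn_succ_iff_fderiv_of_isOpen (isOpen_U d)]
    refine ⟨fun p hp => (hw.hasFDerivAt hp.1).differentiableAt.differentiableWithinAt,
      by simp, ?_⟩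
    exact (ih hw.dW).congr fun p hp => (hw.hasFDerivAt hp.1).fderiv

lemma FT_contDiffOn {d : ℕ} {F : Type} [NormedAddCommGroup F] [NormedSpace ℝ F]
    {w : Euc d → F} (hw : Good w) :
    ContDiffOn ℝ (⊤ : ℕ∞) (FT w) (Set.Ioi (0 : ℝ) ×ˢ Set.univ) :=
  contDiffOn_infty.2 fun n => FT_contDiffOn_nat n hw

lemma Good.fderiv_apply {d : ℕ} {w : Euc d → ℝ} (hw : Good w) {p : ℝ × Euc d} (hp : 0 < p.1)
    (q : ℝ × Euc d) : FT (_root_.dW w) p q = FT (fun y => Lin y q * w y) p := by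
  unfold FT
  rw [ContinuousLinearMap.integral_apply (hw.dW.integrable hp)]
  rfl

lemma good_of_bounded {d : ℕ} {w : Euc d → ℝ} (hw : Continuous w) (C : ℝ) (hC : ∀ y, ‖w y‖ ≤ C) :
    Good w := by
  refine ⟨hw.aestronglyMeasurable, fun c b hb => ?_⟩
  have h := (GaussianFourier.integrable_cexp_neg_mul_sq_norm_add (V := Euc d) (b := (b / 2 : ℝ))
    (by simpa using hb) 0 0).norm
  refine (h.const_mul (Real.exp (c ^ 2 / (2 * b)) * C)).mono' ?_ ?_
  · exact Continuous.aestronglyMeasurable (by fun_prop)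
  · refine Eventually.of_forall fun y => ?_
    rw [norm_mul, norm_norm, Real.norm_of_nonneg (Real.exp_nonneg _), Complex.norm_exp]
    have e : (-((b / 2 : ℝ) : ℂ) * (‖y‖ : ℂ) ^ 2 + 0 * ((inner ℝ (0 : Euc d) y : ℝ) : ℂ)).re
        = -(b / 2) * ‖y‖ ^ 2 := by
      rw [zero_mul, add_zero]
      norm_cast
    rw [e]
    have h1 : Real.exp (c * ‖y‖ - b * ‖y‖ ^ 2) ≤
        Real.exp (c ^ 2 / (2 * b)) * Real.exp (-(b / 2) * ‖y‖ ^ 2) := by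
      rw [← Real.exp_add]
      apply Real.exp_le_exp.2
      have : c ^ 2 / (2 * b) + -(b / 2) * ‖y‖ ^ 2 - (c * ‖y‖ - b * ‖y‖ ^ 2)
        = (c - b * ‖y‖) ^ 2 / (2 * b) := by field_simp; ring
      have : 0 ≤ (c - b * ‖y‖) ^ 2 / (2 * b) := by positivity
      linarith
    calc _ ≤ (Real.exp (c ^ 2 / (2 * b)) * Real.exp (-(b / 2) * ‖y‖ ^ 2)) * C := by
          gcongr; exact hC y
      _ = _ := by ring

lemma Good.coord {d : ℕ} {w : Euc d → ℝ} (hw : Good w) (i : Fin d) :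
    Good (fun y => y i * w y) := by
  have hc : Continuous (fun y : Euc d => y i) := by fun_prop
  refine hw.of_le (hc.aestronglyMeasurable.mul hw.1) 1 fun y => ?_
  rw [norm_mul, one_mul]
  gcongr
  exact (PiLp.norm_apply_le y i).trans (by linarith [Real.add_one_le_exp ‖y‖])

lemma FT_pos {d : ℕ} {w : Euc d → ℝ} (hw : Good w) (hpos : ∀ y, 0 < w y)
    {p : ℝ × Euc d} (hp : 0 < p.1) : 0 < FT w p := by
  unfold FT
  have h0 : ∀ y, 0 < Real.exp (Lin y p) • w y := fun y => mul_pos (Real.exp_pos _) (hpos y)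
  rw [integral_pos_iff_support_of_nonneg (fun y => (h0 y).le) (hw.integrable hp)]
  have : Function.support (fun y => Real.exp (Lin y p) • w y) = Set.univ := by
    ext y; simpa using (hpos y).ne'
  rw [this]
  exact isOpen_univ.measure_pos volume Set.univ_nonempty

/-- Unnormalised heat flow, `∫ exp(-a|x-y|²) w(y) dy`. -/
def HH {d : ℕ} (w : Euc d → ℝ) (a : ℝ) (x : Euc d) : ℝ :=
  Real.exp (-a * ‖x‖ ^ 2) * FT w (a, (2 * a) • x)

lemma HH_eq {d : ℕ} (w : Euc d → ℝ) (a : ℝ) (x : Euc d) :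
    HH w a x = ∫ y, Real.exp (-a * ‖x - y‖ ^ 2) * w y := by
  unfold HH FT
  rw [← integral_const_mul]
  congr 1
  ext y
  rw [smul_eq_mul, ← mul_assoc, ← Real.exp_add, Lin_apply, norm_sub_sq_real, inner_smul_right,
    real_inner_comm]
  congr 2
  ring

lemma HH_hasFDerivAt {d : ℕ} {w : Euc d → ℝ} (hw : Good w) {a : ℝ} (ha : 0 < a) (x : Euc d) :
    ∃ D : Euc d →L[ℝ] ℝ, HasFDerivAt (HH w a) D x ∧ ∀ i : Fin d,
      D (EuclideanSpace.single i 1) =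
        -(2 * a) * (x i * HH w a x) + (2 * a) * HH (fun y => y i * w y) a x := by
  have h1 : HasFDerivAt (fun z : Euc d => (a, (2 * a) • z))
      ((0 : Euc d →L[ℝ] ℝ).prod ((2 * a) • ContinuousLinearMap.id ℝ (Euc d))) x :=
    (hasFDerivAt_const a x).prodMk ((hasFDerivAt_id x).const_smul (2 * a))
  have h2 := (hw.hasFDerivAt (p := (a, (2 * a) • x)) ha).comp x h1
  have h3 := ((hasStrictFDerivAt_norm_sq x).hasFDerivAt.const_mul (-a)).exp
  have h4 := h3.mul h2
  refine ⟨_, h4, fun i => ?_⟩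
  have h5 : FT (dW w) (a, (2 * a) • x) (0, (2 * a) • EuclideanSpace.single i (1 : ℝ)) =
      (2 * a) * FT (fun y => y i * w y) (a, (2 * a) • x) := by
    rw [hw.fderiv_apply ha]
    unfold FT
    rw [← integral_const_mul]
    congr 1
    ext y
    simp only [Lin_apply, smul_eq_mul, inner_smul_right, EuclideanSpace.inner_single_right]
    simp
    ring
  simp only [add_apply, smul_apply,
    ContinuousLinearMap.comp_apply, ContinuousLinearMap.prod_apply, zero_apply,
    ContinuousLinearMap.id_apply, h5, innerSL_apply_apply, EuclideanSpace.inner_single_right,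
    smul_eq_mul, HH, Function.comp]
  simp
  ring

lemma HH_differentiable {d : ℕ} {w : Euc d → ℝ} (hw : Good w) {a : ℝ} (ha : 0 < a) :
    Differentiable ℝ (HH w a) := fun x => by
  obtain ⟨D, hD, _⟩ := HH_hasFDerivAt hw ha x
  exact hD.differentiableAt

lemma HH_fderiv {d : ℕ} {w : Euc d → ℝ} (hw : Good w) {a : ℝ} (ha : 0 < a) (x : Euc d)
    (i : Fin d) : fderiv ℝ (HH w a) x (EuclideanSpace.single i 1) =
        -(2 * a) * (x i * HH w a x) + (2 * a) * HH (fun y => y i * w y) a x := by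
  obtain ⟨D, hD, h⟩ := HH_hasFDerivAt hw ha x
  rw [hD.fderiv, h]

/-- The quadratic quantity appearing in both the time derivative and the Laplacian. -/
def QQ {d : ℕ} (w : Euc d → ℝ) (a : ℝ) (x : Euc d) (i : Fin d) : ℝ :=
  (x i) ^ 2 * HH w a x - 2 * (x i * HH (fun y => y i * w y) a x)
    + HH (fun y => y i * (y i * w y)) a x

lemma HH_fderiv2 {d : ℕ} {w : Euc d → ℝ} (hw : Good w) {a : ℝ} (ha : 0 < a) (x : Euc d)
    (i : Fin d) :
    fderiv ℝ (fun y => fderiv ℝ (HH w a) y (EuclideanSpace.single i 1)) x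
      (EuclideanSpace.single i 1) = -(2 * a) * HH w a x + 4 * a ^ 2 * QQ w a x i := by
  have e : (fun y => fderiv ℝ (HH w a) y (EuclideanSpace.single i 1)) =
      fun y => -(2 * a) * (y i * HH w a y) + (2 * a) * HH (fun y => y i * w y) a y := by
    ext y; exact HH_fderiv hw ha y i
  rw [e]
  have h1 := (HH_differentiable hw ha x).hasFDerivAt
  have h2 := (HH_differentiable (hw.coord i) ha x).hasFDerivAt
  have h3 : HasFDerivAt (fun y : Euc d => y i) (EuclideanSpace.proj i : Euc d →L[ℝ] ℝ) x :=
    (EuclideanSpace.proj i : Euc d →L[ℝ] ℝ).hasFDerivAt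
  have h4 := ((h3.mul h1).const_mul (-(2 * a))).add (h2.const_mul (2 * a))
  have h5 := h4.fderiv
  have h6 := HH_fderiv hw ha x i
  have h7 := HH_fderiv (hw.coord i) ha x i
  refine (congrArg (fun D : Euc d →L[ℝ] ℝ => D (EuclideanSpace.single i 1)) h5).trans ?_
  simp only [add_apply, smul_apply, smul_eq_mul, h6, h7]
  simp [QQ]
  ring

lemma HH_lap {d : ℕ} {w : Euc d → ℝ} (hw : Good w) {a : ℝ} (ha : 0 < a) (x : Euc d) :
    lap d (HH w a) x = -(2 * a * d) * HH w a x + 4 * a ^ 2 * ∑ i, QQ w a x i := by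
  unfold lap
  simp only [HH_fderiv2 hw ha x]
  rw [Finset.sum_add_distrib, Finset.mul_sum]
  simp
  ring

lemma HH_hasDerivAt {d : ℕ} {w : Euc d → ℝ} (hw : Good w) {a : ℝ} (ha : 0 < a) (x : Euc d) :
    HasDerivAt (fun b => HH w b x) (-∑ i, QQ w a x i) a := by
  have h1 : HasDerivAt (fun b : ℝ => (b, (2 * b) • x)) ((1 : ℝ), ((2 : ℝ) * 1) • x) a :=
    (hasDerivAt_id a).prodMk (((hasDerivAt_id a).const_mul 2).smul_const x)
  have h2 := (hw.hasFDerivAt (p := (a, (2 * a) • x)) ha).comp_hasDerivAt a h1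
  have h3 := ((hasDerivAt_id a).neg.mul_const (‖x‖ ^ 2)).exp
  have h4 := h3.mul h2
  refine h4.congr_deriv ?_
  have h5 : FT (dW w) (a, (2 * a) • x) ((1 : ℝ), ((2 : ℝ) * 1) • x) =
      ∑ i, (2 * (x i * FT (fun y => y i * w y) (a, (2 * a) • x))
        - FT (fun y => y i * (y i * w y)) (a, (2 * a) • x)) := by
    rw [hw.fderiv_apply ha]
    unfold FT
    have e : ∀ i, (2 * (x i * ∫ y, Real.exp (Lin y (a, (2 * a) • x)) • (y i * w y))
        - ∫ y, Real.exp (Lin y (a, (2 * a) • x)) • (y i * (y i * w y))) =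
        ∫ y, (2 * (x i * (Real.exp (Lin y (a, (2 * a) • x)) • (y i * w y)))
        - Real.exp (Lin y (a, (2 * a) • x)) • (y i * (y i * w y))) := by
      intro i
      rw [integral_sub, integral_const_mul, integral_const_mul]
      · exact (((hw.coord i).integrable ha).const_mul _).const_mul _
      · exact ((hw.coord i).coord i).integrable ha
    rw [Finset.sum_congr rfl fun i _ => e i, ← integral_finsetSum]
    · congr 1
      ext y
      generalize Real.exp (Lin y (a, (2 * a) • x)) = E
      beta_reduce
      rw [Lin_apply, EuclideanSpace.norm_sq_eq, inner_smul_right, PiLp.inner_apply]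
      simp only [smul_eq_mul, mul_one]
      rw [Finset.mul_sum, ← Finset.sum_sub_distrib, Finset.sum_mul, Finset.mul_sum]
      refine Finset.sum_congr rfl fun i _ => ?_
      simp
      ring
    · intro i _
      exact ((((hw.coord i).integrable ha).const_mul _).const_mul _).sub
        (((hw.coord i).coord i).integrable ha)
  rw [h5]
  have hn : ‖x‖ ^ 2 = ∑ i, x i ^ 2 := by simp [EuclideanSpace.norm_sq_eq]
  have hq : ∑ i, QQ w a x i = Real.exp (-a * ‖x‖ ^ 2) * (‖x‖ ^ 2 * FT w (a, (2 * a) • x)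
      - ∑ i, (2 * (x i * FT (fun y => y i * w y) (a, (2 * a) • x))
        - FT (fun y => y i * (y i * w y)) (a, (2 * a) • x))) := by
    simp only [QQ, HH]
    generalize Real.exp (-a * ‖x‖ ^ 2) = E
    rw [hn, Finset.sum_mul, ← Finset.sum_sub_distrib, Finset.mul_sum]
    refine Finset.sum_congr rfl fun i _ => ?_
    ring
  rw [hq]
  simp only [Function.comp, Pi.neg_apply, id]
  ring

lemma coleHopf_pde {d : ℕ} {u : Euc d → ℝ} (hu : ContDiff ℝ 2 u) (hpos : ∀ x, 0 < u x)
    (α : ℝ) (x : Euc d) :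
    α / 2 * lap d (fun z => -α * Real.log (u z)) x
      - 1 / 2 * ‖gradient (fun z => -α * Real.log (u z)) x‖ ^ 2
    = -α * ((α / 2 * lap d u x) / u x) := by
  have hd : Differentiable ℝ u := hu.differentiable (by norm_num)
  have h1 : ∀ z (i : Fin d), fderiv ℝ (fun z => -α * Real.log (u z)) z (EuclideanSpace.single i 1)
      = -α * (fderiv ℝ u z (EuclideanSpace.single i 1) / u z) := by
    intro z i
    have := (((hd z).hasFDerivAt).log (hpos z).ne').const_mul (-α)
    rw [this.fderiv]
    simp only [smul_apply, smul_eq_mul]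
    ring
  have hd2 : ∀ i : Fin d, Differentiable ℝ (fun z => fderiv ℝ u z (EuclideanSpace.single i 1)) := by
    intro i
    have : ContDiff ℝ 1 (fderiv ℝ u) := hu.fderiv_right (by norm_num)
    exact (this.differentiable (by norm_num)).clm_apply (differentiable_const _)
  have h2 : ∀ i : Fin d,
      fderiv ℝ (fun z => fderiv ℝ (fun z => -α * Real.log (u z)) z (EuclideanSpace.single i 1)) x
        (EuclideanSpace.single i 1) =
      -α * (fderiv ℝ (fun z => fderiv ℝ u z (EuclideanSpace.single i 1)) x
        (EuclideanSpace.single i 1) / u x - (fderiv ℝ u x (EuclideanSpace.single i 1) / u x) ^ 2) := by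
    intro i
    have e : (fun z => fderiv ℝ (fun z => -α * Real.log (u z)) z (EuclideanSpace.single i 1)) =
      fun z => -α * (fderiv ℝ u z (EuclideanSpace.single i 1) / u z) := funext fun z => h1 z i
    rw [e]
    have hi := (hasDerivAt_inv (hpos x).ne').comp_hasFDerivAt x (hd x).hasFDerivAt
    have h5 := (((hd2 i x).hasFDerivAt.mul hi).const_mul (-α)).fderiv
    refine (congrArg (fun D : Euc d →L[ℝ] ℝ => D (EuclideanSpace.single i 1)) h5).trans ?_
    have := (hpos x).ne'
    simp only [add_apply, smul_apply, smul_eq_mul, Function.comp]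
    field_simp
    ring
  have h3 : ‖gradient (fun z => -α * Real.log (u z)) x‖ ^ 2 =
      ∑ i : Fin d, (-α * (fderiv ℝ u x (EuclideanSpace.single i 1) / u x)) ^ 2 := by
    rw [EuclideanSpace.norm_sq_eq]
    refine Finset.sum_congr rfl fun i _ => ?_
    rw [← h1, ← inner_gradient_left, EuclideanSpace.inner_single_right]
    simp
  rw [h3]
  unfold lap
  simp only [h2]
  rw [Finset.mul_sum, Finset.mul_sum, Finset.mul_sum, Finset.sum_div, Finset.mul_sum,
    ← Finset.sum_sub_distrib]
  refine Finset.sum_congr rfl fun i _ => ?_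
  ring

lemma heatP_eq {d : ℕ} {α t : ℝ} (ht : t ≠ 0) (f : Euc d → ℝ) (x : Euc d) :
    heatP d α t f x = (2 * π * α * t) ^ (-(d : ℝ) / 2) * HH f (1 / (2 * α * t)) x := by
  rw [heatP, if_neg ht, HH_eq, ← integral_const_mul]
  congr 1
  ext y
  rw [mul_assoc]
  congr 3
  ring

/-- `v(t,x) := (V_t φ)(x)` satisfies `v(0,·) = φ`, is smooth on `(0,∞) × ℝ^d`,
and solves the Hamilton–Jacobi equation `∂_t v = (α/2) Δ v - (1/2)|∇v|²` for `t > 0`. -/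
theorem statement0 (d : ℕ) (hd : 1 ≤ d) (α : ℝ) (hα : 0 < α)
    (φ : SchwartzMap (Euc d) ℝ) :
    (∀ x, coleHopf d α 0 (fun y => φ y) x = φ x) ∧
    ContDiffOn ℝ (⊤ : ℕ∞)
      (fun p : ℝ × Euc d => coleHopf d α p.1 (fun y => φ y) p.2)
      (Set.Ioi (0 : ℝ) ×ˢ Set.univ) ∧
    ∀ t > (0 : ℝ), ∀ x : Euc d,
      HasDerivAt (fun s => coleHopf d α s (fun y => φ y) x)
        (α / 2 * lap d (coleHopf d α t (fun y => φ y)) x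
          - 1 / 2 * ‖gradient (coleHopf d α t (fun y => φ y)) x‖ ^ 2) t := by
  set f : Euc d → ℝ := fun y => Real.exp (-φ y / α) with hf
  have hgood : Good f := by
    obtain ⟨C, hC⟩ : ∃ C, ∀ y, ‖φ y‖ ≤ C :=
      ⟨_, fun y => φ.toBoundedContinuousFunction.norm_coe_le_norm y⟩
    refine good_of_bounded ?_ (Real.exp (C / α)) fun y => ?_
    · have := φ.continuous
      fun_prop
    · rw [Real.norm_of_nonneg (Real.exp_nonneg _)]
      apply Real.exp_le_exp.2
      gcongr
      exact (neg_le_abs _).trans (hC y)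
  have hfpos : ∀ y, 0 < f y := fun y => Real.exp_pos _
  have hHpos : ∀ a > 0, ∀ x, 0 < HH f a x := fun a ha x =>
    mul_pos (Real.exp_pos _) (FT_pos hgood hfpos ha)
  have hupos : ∀ t > 0, ∀ x, 0 < heatP d α t f x := fun t ht x => by
    rw [heatP_eq ht.ne']
    exact mul_pos (by positivity) (hHpos _ (by positivity) x)
  have hsm : ContDiffOn ℝ (⊤ : ℕ∞) (fun p : ℝ × Euc d => heatP d α p.1 f p.2)
      (Set.Ioi (0 : ℝ) ×ˢ Set.univ) := by
    have e : Set.EqOn (fun p : ℝ × Euc d => heatP d α p.1 f p.2)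
      (fun p => (2 * π * α * p.1) ^ (-(d : ℝ) / 2) * (Real.exp (-(1 / (2 * α * p.1)) * ‖p.2‖ ^ 2) *
        FT f (1 / (2 * α * p.1), (2 * (1 / (2 * α * p.1))) • p.2)))
      (Set.Ioi (0 : ℝ) ×ˢ Set.univ) := fun p hp => heatP_eq (ne_of_gt hp.1) f p.2
    refine ContDiffOn.congr ?_ e
    have h1 : ContDiffOn ℝ (⊤ : ℕ∞) (fun p : ℝ × Euc d => 1 / (2 * α * p.1))
      (Set.Ioi (0 : ℝ) ×ˢ Set.univ) := by
      refine contDiffOn_const.div (by fun_prop) fun p hp => ?_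
      have : 0 < p.1 := hp.1
      positivity
    have h2 : ContDiffOn ℝ (⊤ : ℕ∞) (fun p : ℝ × Euc d => (2 * π * α * p.1) ^ (-(d : ℝ) / 2))
      (Set.Ioi (0 : ℝ) ×ˢ Set.univ) := by
      refine ContDiffOn.rpow_const_of_ne (by fun_prop) fun p hp => ?_
      have : 0 < p.1 := hp.1
      positivity
    have h3 : ContDiffOn ℝ (⊤ : ℕ∞) (fun p : ℝ × Euc d => ‖p.2‖ ^ 2)
      (Set.Ioi (0 : ℝ) ×ˢ Set.univ) := (contDiff_snd.norm_sq ℝ).contDiffOn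
    have h4 := (FT_contDiffOn hgood).comp
      (h1.prodMk ((contDiffOn_const (c := (2 : ℝ)).mul h1).smul contDiff_snd.contDiffOn))
      (fun p hp => ⟨by
        have : 0 < p.1 := hp.1
        show 0 < 1 / (2 * α * p.1)
        positivity, trivial⟩)
    exact h2.mul (((h1.neg).mul h3).exp.mul h4)
  have hux : ∀ t > 0, ContDiff ℝ 2 (heatP d α t f) := fun t ht => by
    have h1 : ContDiffOn ℝ (⊤ : ℕ∞) (heatP d α t f) Set.univ :=
      hsm.comp (g := fun p : ℝ × Euc d => heatP d α p.1 f p.2) (f := fun x : Euc d => (t, x))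
        (by fun_prop) (fun x _ => ⟨ht, trivial⟩)
    exact (contDiffOn_univ.1 h1).of_le (WithTop.coe_le_coe.2 (le_top : (2 : ℕ∞) ≤ ⊤))
  refine ⟨fun x => ?_, ?_, fun t ht x => ?_⟩
  · simp only [coleHopf, heatP, if_true, Real.log_exp]
    field_simp
  · exact contDiffOn_const.mul (hsm.log fun p hp => (hupos _ hp.1 _).ne')
  · have hpde := coleHopf_pde (hux t ht) (hupos t ht) α x
    have ha : 0 < 1 / (2 * α * t) := by positivity
    have hc0 : 0 < 2 * π * α * t := by positivity
    have hlap : lap d (heatP d α t f) x = (2 * π * α * t) ^ (-(d : ℝ) / 2) *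
        lap d (HH f (1 / (2 * α * t))) x := by
      have e : heatP d α t f = fun x => (2 * π * α * t) ^ (-(d : ℝ) / 2) *
        HH f (1 / (2 * α * t)) x := funext fun x => heatP_eq ht.ne' f x
      rw [e]
      unfold lap
      rw [Finset.mul_sum]
      refine Finset.sum_congr rfl fun i _ => ?_
      have e1 : ∀ z, fderiv ℝ (fun x => (2 * π * α * t) ^ (-(d : ℝ) / 2) *
          HH f (1 / (2 * α * t)) x) z = (2 * π * α * t) ^ (-(d : ℝ) / 2) •
          fderiv ℝ (HH f (1 / (2 * α * t))) z := fun z =>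
        ((HH_differentiable hgood ha z).hasFDerivAt.const_mul _).fderiv
      simp only [e1, smul_apply]
      have e2 : DifferentiableAt ℝ (fun z => fderiv ℝ (HH f (1 / (2 * α * t))) z
          (EuclideanSpace.single i 1)) x := by
        have e3 : (fun z => fderiv ℝ (HH f (1 / (2 * α * t))) z (EuclideanSpace.single i 1)) = _ :=
          funext fun z => HH_fderiv hgood ha z i
        rw [e3]
        have := HH_differentiable hgood ha
        have := HH_differentiable (hgood.coord i) ha
        fun_prop
      have e4 := (e2.hasFDerivAt.const_smul ((2 * π * α * t) ^ (-(d : ℝ) / 2))).fderiv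
      exact congrArg (fun D : Euc d →L[ℝ] ℝ => D (EuclideanSpace.single i 1)) e4
    have hder : HasDerivAt (fun s => heatP d α s f x) (α / 2 * lap d (heatP d α t f) x) t := by
      have e : (fun s => heatP d α s f x) =ᶠ[nhds t] fun s => (2 * π * α * s) ^ (-(d : ℝ) / 2) *
        HH f (1 / (2 * α * s)) x := by
        filter_upwards [Ioi_mem_nhds ht] with s hs
        exact heatP_eq (ne_of_gt hs) f x
      refine HasDerivAt.congr_of_eventuallyEq ?_ e
      have h1 : HasDerivAt (fun s : ℝ => 1 / (2 * α * s)) (-(2 * α) / (2 * α * t) ^ 2) t := by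
        have h0 : 2 * α * t ≠ 0 := by positivity
        have := ((hasDerivAt_id t).const_mul (2 * α)).fun_inv h0
        simp only [one_div]
        simpa only [mul_one, id] using this
      have h2 : HasDerivAt (fun s : ℝ => (2 * π * α * s) ^ (-(d : ℝ) / 2))
          ((2 * π * α) * (-(d : ℝ) / 2) * (2 * π * α * t) ^ (-(d : ℝ) / 2 - 1)) t := by
        have := ((hasDerivAt_id t).const_mul (2 * π * α)).rpow_const (p := -(d : ℝ) / 2)
          (Or.inl (by simpa using hc0.ne'))
        simpa using this
      have h3 := (HH_hasDerivAt hgood ha x).comp t h1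
      have h4 := h2.mul h3
      refine h4.congr_deriv ?_
      rw [hlap, HH_lap hgood ha, Real.rpow_sub_one hc0.ne']
      simp only [Function.comp]
      field_simp
      ring
    have hlog := (hder.log (hupos t ht x).ne').const_mul (-α)
    exact hlog.congr_deriv hpde.symm
end
end

section
/- Let μ be a tempered measure on ℝ^d, let ψ be a Schwartz function on ℝ^d, and let T > 0. Then sup_{t ∈ [0,T]} ∫_{ℝ^d} |(P_t ψ)(x)| μ(dx) < ∞. -/
open MeasureTheory Real Filter Set

noncomputable section

lemma aux_one_add_pow_le {d : ℕ} (k : ℕ) (x y : Euc d) :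
    (1 + ‖x‖) ^ k ≤ (1 + ‖y‖) ^ k * (1 + ‖x - y‖) ^ k := by
  rw [← mul_pow]
  apply pow_le_pow_left₀ (by positivity)
  have h1 : ‖x‖ ≤ ‖y‖ + ‖x - y‖ := by
    have := norm_add_le y (x - y)
    simpa using this
  nlinarith [mul_nonneg (norm_nonneg y) (norm_nonneg (x - y))]

lemma aux_pow_exp_bound (k : ℕ) (c : ℝ) (hc : 0 < c) :
    ∃ M : ℝ, 0 ≤ M ∧ ∀ r : ℝ, 0 ≤ r → (1 + r) ^ k * Real.exp (-c * r ^ 2) ≤ M := by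
  refine ⟨(k.factorial : ℝ) * Real.exp (1 + 1 / (4 * c)), by positivity, fun r hr => ?_⟩
  have h1 := Real.pow_div_factorial_le_exp (x := 1 + r) (by positivity) k
  rw [div_le_iff₀ (by positivity)] at h1
  calc (1 + r) ^ k * Real.exp (-c * r ^ 2)
      ≤ (Real.exp (1 + r) * k.factorial) * Real.exp (-c * r ^ 2) := by gcongr
    _ = k.factorial * Real.exp ((1 + r) + (-c * r ^ 2)) := by
        rw [Real.exp_add (1 + r) (-c * r ^ 2)]; ring
    _ ≤ _ := by
        gcongr ?_ * Real.exp ?_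
        have : 1 / (4 * c) - r + c * r ^ 2 = (2 * c * r - 1) ^ 2 / (4 * c) := by
          field_simp; ring
        have h2 : 0 ≤ (2 * c * r - 1) ^ 2 / (4 * c) := by positivity
        linarith

lemma aux_gauss {d : ℕ} (b : ℝ) (hb : 0 < b) (x : Euc d) :
    Integrable (fun y : Euc d => Real.exp (-b * ‖x - y‖ ^ 2)) ∧
    ∫ y : Euc d, Real.exp (-b * ‖x - y‖ ^ 2) = (π / b) ^ ((d : ℝ) / 2) := by
  have h : ∫ y : Euc d, Real.exp (-b * ‖x - y‖ ^ 2) = (π / b) ^ ((d : ℝ) / 2) := by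
    rw [integral_sub_left_eq_self (fun z : Euc d => Real.exp (-b * ‖z‖ ^ 2)) volume x,
      GaussianFourier.integral_rexp_neg_mul_sq_norm hb]
    simp
  refine ⟨?_, h⟩
  by_contra hn
  rw [integral_undef hn] at h
  have : 0 < (π / b) ^ ((d : ℝ) / 2) := by positivity
  linarith

lemma aux_heat_decay {d : ℕ} (α : ℝ) (hα : 0 < α) (ψ : SchwartzMap (Euc d) ℝ) (T : ℝ)
    (hT : 0 < T) (k : ℕ) :
    ∃ C : ℝ, 0 ≤ C ∧ ∀ t ∈ Set.Icc (0 : ℝ) T, ∀ x,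
      (1 + ‖x‖) ^ k * |heatP d α t (fun y => ψ y) x| ≤ C := by
  obtain ⟨A, hA0, hA⟩ : ∃ A : ℝ, 0 ≤ A ∧ ∀ y, (1 + ‖y‖) ^ k * |ψ y| ≤ A := by
    refine ⟨2 ^ k * (Finset.Iic (k, 0)).sup (fun m => SchwartzMap.seminorm ℝ m.1 m.2) ψ,
      by positivity, fun y => ?_⟩
    simpa using SchwartzMap.one_add_le_sup_seminorm_apply (𝕜 := ℝ) (m := (k, 0)) (le_refl k)
      (le_refl 0) ψ y
  obtain ⟨M, hM0, hM⟩ := aux_pow_exp_bound k (1 / (4 * α * T)) (by positivity)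
  refine ⟨max A (A * M * 2 ^ ((d : ℝ) / 2)), le_max_of_le_left hA0, fun t ht x => ?_⟩
  by_cases h0 : t = 0
  · simp only [heatP, h0, if_true]
    exact (hA x).trans (le_max_left _ _)
  refine le_trans ?_ (le_max_right _ _)
  have htpos : 0 < t := lt_of_le_of_ne ht.1 (Ne.symm h0)
  simp only [heatP, h0, if_false]
  set b : ℝ := 1 / (4 * α * t) with hb
  have hbpos : 0 < b := by positivity
  obtain ⟨gi, gv⟩ := aux_gauss b hbpos x
  set N : ℝ := (2 * π * α * t) ^ (-(d : ℝ) / 2) with hN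
  have hN0 : 0 < N := by positivity
  have key : ∀ y : Euc d, ‖(1 + ‖x‖) ^ k * (N * Real.exp (-‖x - y‖ ^ 2 / (2 * α * t)) * ψ y)‖
      ≤ (A * M * N) * Real.exp (-b * ‖x - y‖ ^ 2) := by
    intro y
    have e1 : Real.exp (-‖x - y‖ ^ 2 / (2 * α * t)) =
        Real.exp (-b * ‖x - y‖ ^ 2) * Real.exp (-b * ‖x - y‖ ^ 2) := by
      rw [← Real.exp_add, hb]; congr 1; field_simp; ring
    have e2 : Real.exp (-b * ‖x - y‖ ^ 2) ≤ Real.exp (-(1 / (4 * α * T)) * ‖x - y‖ ^ 2) := by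
      apply Real.exp_le_exp.2
      have : 1 / (4 * α * T) ≤ b := by
        rw [hb]; gcongr; exact ht.2
      nlinarith [sq_nonneg ‖x - y‖]
    have e3 : (1 + ‖x - y‖) ^ k * Real.exp (-b * ‖x - y‖ ^ 2) ≤ M :=
      le_trans (by gcongr) (hM ‖x - y‖ (norm_nonneg _))
    rw [norm_mul, norm_mul, norm_mul, Real.norm_eq_abs, Real.norm_eq_abs, Real.norm_eq_abs,
      Real.norm_eq_abs, abs_of_pos hN0, Real.abs_exp, abs_of_nonneg (by positivity), e1]
    set E := Real.exp (-b * ‖x - y‖ ^ 2)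
    have hE : 0 < E := Real.exp_pos _
    calc (1 + ‖x‖) ^ k * (N * (E * E) * |ψ y|)
        ≤ ((1 + ‖y‖) ^ k * (1 + ‖x - y‖) ^ k) * (N * (E * E) * |ψ y|) := by
          gcongr; exact aux_one_add_pow_le k x y
      _ = ((1 + ‖y‖) ^ k * |ψ y|) * ((1 + ‖x - y‖) ^ k * E) * (N * E) := by ring
      _ ≤ A * M * (N * E) := by
          gcongr
          exact hA y
      _ = _ := by ring
  have h1 := norm_integral_le_of_norm_le (gi.const_mul (A * M * N)) (Filter.Eventually.of_forall key)
  rw [integral_const_mul, integral_const_mul, gv, norm_mul, Real.norm_eq_abs, Real.norm_eq_abs,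
    abs_of_nonneg (by positivity : (0:ℝ) ≤ (1 + ‖x‖) ^ k)] at h1
  refine h1.trans (le_of_eq ?_)
  have e4 : π / b = 2 * (2 * π * α * t) := by rw [hb]; field_simp; ring
  rw [e4, Real.mul_rpow (by norm_num) (by positivity), hN, neg_div, Real.rpow_neg (by positivity)]
  have : (2 * π * α * t) ^ ((d : ℝ) / 2) ≠ 0 := by positivity
  field_simp

/-- Rapid decay. -/
def RapidDecay {d : ℕ} (h : Euc d → ℝ) : Prop :=
  ∀ k : ℕ, ∃ C : ℝ, 0 ≤ C ∧ ∀ y, (1 + ‖y‖) ^ k * ‖h y‖ ≤ C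

lemma RapidDecay.bound {d : ℕ} {h : Euc d → ℝ} (hh : RapidDecay h) (k : ℕ) :
    ∃ w : Euc d → ℝ, Integrable w ∧ ∀ y, (1 + ‖y‖) ^ k * ‖h y‖ ≤ w y := by
  obtain ⟨C, hC, hb⟩ := hh (k + (d + 1))
  refine ⟨fun y => C * (1 + ‖y‖) ^ (-((d + 1 : ℕ) : ℝ)),
    (integrable_one_add_norm (by simp)).const_mul C, fun y => ?_⟩
  have hp : (0 : ℝ) < 1 + ‖y‖ := by positivity
  simp only
  rw [Real.rpow_neg hp.le, Real.rpow_natCast, ← div_eq_mul_inv, le_div_iff₀ (by positivity)]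
  calc _ = (1 + ‖y‖) ^ (k + (d + 1)) * ‖h y‖ := by rw [pow_add]; ring
    _ ≤ C := hb y

lemma aux_conv_decay {d : ℕ} {h : Euc d → ℝ} (hh : RapidDecay h)
    (hl : LocallyIntegrable h volume) (k n : ℕ) :
    ∀ (F F' : Type) [NormedAddCommGroup F] [NormedSpace ℝ F] [NormedAddCommGroup F']
      [NormedSpace ℝ F'] (L : ℝ →L[ℝ] F →L[ℝ] F') (g : Euc d → F),
      ContDiff ℝ (⊤ : ℕ∞) g → HasCompactSupport g →
      ∃ C : ℝ, ∀ x, ‖x‖ ^ k * ‖iteratedFDeriv ℝ n (convolution h g L volume) x‖ ≤ C := by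
  induction n with
  | zero =>
    intro F F' _ _ _ _ L g hg hc
    obtain ⟨w, hw, hwb⟩ := hh.bound k
    obtain ⟨B, hB⟩ : ∃ B : ℝ, ∀ z, (1 + ‖z‖) ^ k * ‖g z‖ ≤ B := by
      have hcont : Continuous (fun z : Euc d => ((1 + ‖z‖) ^ k) • g z) := by
        have := hg.continuous
        fun_prop
      have hcs : HasCompactSupport (fun z : Euc d => ((1 + ‖z‖) ^ k) • g z) := hc.smul_left
      obtain ⟨B, hB⟩ := hcs.exists_bound_of_continuous hcont
      refine ⟨B, fun z => ?_⟩
      have := hB z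
      rwa [norm_smul, Real.norm_eq_abs, abs_of_nonneg (by positivity)] at this
    have hB0 : 0 ≤ B := le_trans (by positivity) (hB 0)
    refine ⟨∫ y, ‖L‖ * B * w y, fun x => ?_⟩
    rw [norm_iteratedFDeriv_zero, convolution]
    have key : ∀ y, ‖((1 + ‖x‖) ^ k) • (L (h y)) (g (x - y))‖ ≤ ‖L‖ * B * w y := by
      intro y
      rw [norm_smul, Real.norm_eq_abs, abs_of_nonneg (by positivity)]
      calc (1 + ‖x‖) ^ k * ‖(L (h y)) (g (x - y))‖
          ≤ ((1 + ‖y‖) ^ k * (1 + ‖x - y‖) ^ k) * (‖L‖ * ‖h y‖ * ‖g (x - y)‖) := by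
            gcongr
            · exact aux_one_add_pow_le k x y
            · exact L.le_opNorm₂ _ _
        _ = ‖L‖ * ((1 + ‖x - y‖) ^ k * ‖g (x - y)‖) * ((1 + ‖y‖) ^ k * ‖h y‖) := by ring
        _ ≤ ‖L‖ * B * w y := by
            gcongr
            · exact hB _
            · exact hwb y
    have h1 := norm_integral_le_of_norm_le (hw.const_mul (‖L‖ * B))
      (Filter.Eventually.of_forall key)
    rw [integral_smul, norm_smul, Real.norm_eq_abs, abs_of_nonneg (by positivity)] at h1
    refine le_trans ?_ h1
    gcongr
    linarith [norm_nonneg x]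
  | succ n ih =>
    intro F F' _ _ _ _ L g hg hc
    have hd : fderiv ℝ (convolution h g L volume) =
        convolution h (fderiv ℝ g) (L.precompR (Euc d)) volume := by
      ext1 x
      exact (hc.hasFDerivAt_convolution_right L hl (hg.of_le (by norm_cast)) x).fderiv
    obtain ⟨C, hC⟩ := ih (Euc d →L[ℝ] F) (Euc d →L[ℝ] F') (L.precompR (Euc d)) (fderiv ℝ g)
      (hg.fderiv_right (by norm_cast)) (hc.fderiv ℝ)
    refine ⟨C, fun x => ?_⟩
    rw [← norm_iteratedFDeriv_fderiv, hd]
    exact hC x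

/-- Any rapidly decreasing envelope is dominated by a Schwartz function. -/
lemma aux_dominate {d : ℕ} (C : ℕ → ℝ) (hC : ∀ k, 0 ≤ C k) :
    ∃ Φ : SchwartzMap (Euc d) ℝ, ∀ (x : Euc d) (a : ℝ),
      (∀ k, (1 + ‖x‖) ^ k * a ≤ C k) → a ≤ Φ x := by
  set H : ℝ → ℝ := fun r => ⨅ k, C k / (1 + max r 0) ^ k with hH
  have hbdd : ∀ r, BddBelow (Set.range fun k => C k / (1 + max r 0) ^ k) := fun r =>
    ⟨0, by rintro _ ⟨k, rfl⟩; exact div_nonneg (hC k) (by positivity)⟩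
  have hH0 : ∀ r, 0 ≤ H r := fun r => Real.iInf_nonneg fun k => div_nonneg (hC k) (by positivity)
  have hanti : Antitone H := by
    intro r s hrs
    refine ciInf_mono (hbdd s) fun k => ?_
    have := hC k
    gcongr
  set h : Euc d → ℝ := fun y => H (‖y‖ - 1) with hh
  have hmeas : Measurable h := hanti.measurable.comp (by fun_prop)
  have hrd : RapidDecay h := by
    intro k
    refine ⟨2 ^ k * C k, mul_nonneg (by positivity) (hC k), fun y => ?_⟩
    have h1 : H (‖y‖ - 1) ≤ C k / (1 + max (‖y‖ - 1) 0) ^ k := ciInf_le (hbdd _) k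
    rw [le_div_iff₀ (by positivity)] at h1
    rw [Real.norm_eq_abs, abs_of_nonneg (hH0 _)]
    have h2 : 1 + ‖y‖ ≤ 2 * (1 + max (‖y‖ - 1) 0) := by
      have := le_max_left (‖y‖ - 1) 0
      have := le_max_right (‖y‖ - 1) 0
      linarith
    calc (1 + ‖y‖) ^ k * H (‖y‖ - 1) ≤ (2 * (1 + max (‖y‖ - 1) 0)) ^ k * H (‖y‖ - 1) := by
          gcongr
          exact hH0 _
      _ = 2 ^ k * (H (‖y‖ - 1) * (1 + max (‖y‖ - 1) 0) ^ k) := by rw [mul_pow]; ring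
      _ ≤ _ := by gcongr
  have hint : Integrable h := by
    obtain ⟨w, hw, hb⟩ := hrd.bound 0
    exact hw.mono' hmeas.aestronglyMeasurable (Filter.Eventually.of_forall fun y => by
      simpa using hb y)
  let φ : ContDiffBump (0 : Euc d) := ⟨1 / 2, 1, by norm_num, by norm_num⟩
  set g : Euc d → ℝ := φ.normed volume with hg
  have hgs : ContDiff ℝ (⊤ : ℕ∞) g := φ.contDiff_normed
  have hgc : HasCompactSupport g := φ.hasCompactSupport_normed
  let Φ : SchwartzMap (Euc d) ℝ :=
    { toFun := convolution h g (ContinuousLinearMap.lsmul ℝ ℝ) volume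
      smooth' := hgc.contDiff_convolution_right _ hint.locallyIntegrable hgs
      decay' := fun k n => aux_conv_decay hrd hint.locallyIntegrable k n ℝ ℝ _ g hgs hgc }
  refine ⟨Φ, fun x a ha => ?_⟩
  have haH : a ≤ H ‖x‖ := by
    refine le_ciInf fun k => ?_
    rw [max_eq_left (norm_nonneg x), le_div_iff₀ (by positivity), mul_comm]
    exact ha k
  change a ≤ ∫ y, h y • g (x - y)
  have hone : ∫ y, a * g (x - y) = a := by
    rw [integral_const_mul, integral_sub_left_eq_self g volume x, φ.integral_normed, mul_one]
  have hgi : Integrable g := φ.integrable_normed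
  rw [← hone]
  refine integral_mono ((hgi.comp_sub_left x).const_mul a) ?_ fun y => ?_
  · exact (hgc.convolutionExists_right (ContinuousLinearMap.lsmul ℝ ℝ)
      hint.locallyIntegrable hgs.continuous x)
  · simp only [smul_eq_mul]
    by_cases hy : g (x - y) = 0
    · simp [hy]
    · have hmem : x - y ∈ Function.support g := hy
      rw [hg, φ.support_normed_eq, mem_ball_zero_iff] at hmem
      have hmem' : ‖x - y‖ < 1 := hmem
      have : ‖y‖ - 1 ≤ ‖x‖ := by
        have := norm_sub_norm_le y x
        rw [norm_sub_rev] at this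
        linarith
      exact mul_le_mul_of_nonneg_right (haH.trans (hanti this)) (φ.nonneg_normed _)

/-- for a tempered measure `μ`, a Schwartz function `ψ` and `T > 0`,
`sup_{t ∈ [0,T]} ∫ |P_t ψ| dμ < ∞`. -/
theorem statement4 (d : ℕ) (hd : 1 ≤ d) (α : ℝ) (hα : 0 < α)
    (μ : Measure (Euc d)) (hμ : IsTempered μ)
    (ψ : SchwartzMap (Euc d) ℝ) (T : ℝ) (hT : 0 < T) :
    (⨆ t ∈ Set.Icc (0 : ℝ) T,
      ∫⁻ x, ENNReal.ofReal |heatP d α t (fun y => ψ y) x| ∂μ) < ⊤ := by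
  choose C hC0 hC using aux_heat_decay α hα ψ T hT
  obtain ⟨Φ, hΦ⟩ := aux_dominate (d := d) C hC0
  refine lt_of_le_of_lt ?_ (hμ.2 Φ).lintegral_lt_top
  refine iSup₂_le fun t ht => lintegral_mono fun x => ENNReal.ofReal_le_ofReal ?_
  exact hΦ x _ fun k => hC k t ht x
end
end

section
/- Let φ be a Schwartz function on ℝ^d. Then for every t ≥ 0 the Cole–Hopf transform V_t φ = -α ln(P_t e^{-φ/α}) is a Schwartz function, and the maps t ↦ V_t φ, t ↦ ∂_t V_t φ, t ↦ Δ V_t φ, and t ↦ |∇ V_t φ|² are all continuous from [0,∞) to the Schwartz space S. -/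
open MeasureTheory Real Filter Set

noncomputable section

/-! ### The standard Gaussian density -/

/-- Standard Gaussian density on `ℝ^d`. -/
def gam (d : ℕ) (z : Euc d) : ℝ := (2 * π) ^ (-(d : ℝ) / 2) * Real.exp (-‖z‖ ^ 2 / 2)

lemma gam_nonneg (d : ℕ) (z : Euc d) : 0 ≤ gam d z := by unfold gam; positivity

lemma gam_continuous (d : ℕ) : Continuous (gam d) := by unfold gam; fun_prop

lemma gam_integral (d : ℕ) : ∫ z, gam d z = 1 := by
  unfold gam
  rw [integral_const_mul]
  have h := GaussianFourier.integral_rexp_neg_mul_sq_norm (V := Euc d) (b := 1/2) (by norm_num)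
  have h2 : (fun z : Euc d => Real.exp (-‖z‖ ^ 2 / 2)) =
      fun z => Real.exp (-(1/2) * ‖z‖ ^ 2) := by
    funext z; congr 1; ring
  rw [h2, h, finrank_euclideanSpace_fin]
  rw [show π / (1/2) = 2 * π by ring, ← Real.rpow_add (by positivity)]
  rw [show -(d:ℝ)/2 + (d:ℝ)/2 = 0 by ring, Real.rpow_zero]

lemma gam_integrable_pow (d k : ℕ) : Integrable (fun z : Euc d => ‖z‖ ^ k * gam d z) := by
  have h0 : Integrable (fun z : Euc d => Real.exp (-(1/4) * ‖z‖ ^ 2)) := by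
    have := GaussianFourier.integrable_cexp_neg_mul_sq_norm_add (V := Euc d) (b := (1/4 : ℂ))
      (by norm_num) 0 0
    have h := this.norm
    refine h.congr (Eventually.of_forall fun z => ?_)
    simp only [Complex.norm_exp]
    congr 1
    simp [← Complex.ofReal_pow]
  have h1 := h0.const_mul ((2 * π) ^ (-(d : ℝ) / 2) * ((k.factorial : ℝ) * Real.exp 1))
  refine h1.mono' ((by fun_prop : Continuous fun z : Euc d => ‖z‖ ^ k).mul
    (gam_continuous d)).aestronglyMeasurable (Eventually.of_forall fun z => ?_)
  rw [Real.norm_of_nonneg (mul_nonneg (by positivity) (gam_nonneg d z))]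
  have hs := Real.pow_div_factorial_le_exp (‖z‖) (norm_nonneg z) k
  rw [div_le_iff₀ (by positivity)] at hs
  have h3 : Real.exp ‖z‖ * Real.exp (-‖z‖ ^ 2 / 2) ≤ Real.exp 1 * Real.exp (-(1/4) * ‖z‖ ^ 2) := by
    rw [← Real.exp_add, ← Real.exp_add]
    apply Real.exp_le_exp.2
    nlinarith [sq_nonneg (‖z‖ - 2)]
  unfold gam
  have hp : 0 ≤ (2 * π) ^ (-(d : ℝ) / 2) := by positivity
  calc ‖z‖ ^ k * ((2 * π) ^ (-(d : ℝ) / 2) * Real.exp (-‖z‖ ^ 2 / 2))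
      ≤ (Real.exp ‖z‖ * k.factorial) * ((2 * π) ^ (-(d : ℝ) / 2) * Real.exp (-‖z‖ ^ 2 / 2)) := by
        gcongr
    _ = (2 * π) ^ (-(d : ℝ) / 2) * k.factorial * (Real.exp ‖z‖ * Real.exp (-‖z‖ ^ 2 / 2)) := by ring
    _ ≤ (2 * π) ^ (-(d : ℝ) / 2) * k.factorial *
        (Real.exp 1 * Real.exp (-(1/4) * ‖z‖ ^ 2)) := by gcongr
    _ = _ := by ring

lemma gam_integrable (d : ℕ) : Integrable (gam d) := by
  simpa using gam_integrable_pow d 0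

lemma gam_hasFDerivAt (d : ℕ) (z : Euc d) :
    HasFDerivAt (gam d) (-(gam d z) • (innerSL ℝ z)) z := by
  have h1 : HasFDerivAt (fun z : Euc d => ‖z‖ ^ 2) (2 • (innerSL ℝ z)) z :=
    (hasStrictFDerivAt_norm_sq z).hasFDerivAt
  have h2 := ((h1.const_mul (-1/2)).exp).const_mul ((2 * π) ^ (-(d : ℝ) / 2))
  refine (h2.congr_fderiv ?_).congr_of_eventuallyEq (Eventually.of_forall fun w => ?_)
  · ext v
    simp [gam]
    ring_nf
  · simp only [gam]
    ring_nf

/-! ### Gaussian averages of Schwartz functions -/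

section avg

variable {d : ℕ} {F : Type} [NormedAddCommGroup F] [NormedSpace ℝ F]

/-- Gaussian average at scale `a`. -/
def avg (a : ℝ) (g : SchwartzMap (Euc d) F) (x : Euc d) : F :=
  ∫ z, gam d z • g (x - a • z)

lemma avg_integrable (a : ℝ) (g : SchwartzMap (Euc d) F) (x : Euc d) :
    Integrable (fun z => gam d z • g (x - a • z)) := by
  refine ((gam_integrable d).mul_const (SchwartzMap.seminorm ℝ 0 0 g)).mono'
    ((gam_continuous d).smul (g.continuous.comp (by fun_prop))).aestronglyMeasurable
    (Eventually.of_forall fun z => ?_)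
  rw [norm_smul, Real.norm_of_nonneg (gam_nonneg d z)]
  exact mul_le_mul_of_nonneg_left (SchwartzMap.norm_le_seminorm ℝ g _) (gam_nonneg d z)

lemma avg_hasFDerivAt (a : ℝ) (g : SchwartzMap (Euc d) F) (x : Euc d) :
    HasFDerivAt (avg a g) (avg a (SchwartzMap.fderivCLM ℝ (Euc d) F g) x) x := by
  refine hasFDerivAt_integral_of_dominated_of_fderiv_le
    (F' := fun x z => gam d z • (SchwartzMap.fderivCLM ℝ (Euc d) F g) (x - a • z))
    (bound := fun z => gam d z * SchwartzMap.seminorm ℝ 0 0 (SchwartzMap.fderivCLM ℝ (Euc d) F g))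
    (s := univ) univ_mem ?_ ?_ ?_ ?_ ?_ ?_
  · exact Eventually.of_forall fun y => (avg_integrable a g y).aestronglyMeasurable
  · exact avg_integrable a g x
  · exact (avg_integrable a _ x).aestronglyMeasurable
  · refine Eventually.of_forall fun z y _ => ?_
    rw [norm_smul, Real.norm_of_nonneg (gam_nonneg d z)]
    exact mul_le_mul_of_nonneg_left (SchwartzMap.norm_le_seminorm ℝ _ _) (gam_nonneg d z)
  · exact (gam_integrable d).mul_const _
  · refine Eventually.of_forall fun z y _ => ?_
    have h1 : HasFDerivAt (fun y : Euc d => y - a • z) (ContinuousLinearMap.id ℝ (Euc d)) y :=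
      (hasFDerivAt_id y).sub_const _
    have := ((g.hasFDerivAt (y - a • z)).comp y h1).const_smul (gam d z)
    rw [ContinuousLinearMap.comp_id] at this
    exact this

lemma avg_zero [CompleteSpace F] (g : SchwartzMap (Euc d) F) (x : Euc d) : avg 0 g x = g x := by
  simp [avg, integral_smul_const, gam_integral]

lemma avg_contDiff (n : ℕ) : ∀ {F : Type} [NormedAddCommGroup F] [NormedSpace ℝ F] (a : ℝ)
    (g : SchwartzMap (Euc d) F), ContDiff ℝ n (avg a g) := by
  induction n with
  | zero =>
    intro F _ _ a g
    exact contDiff_zero.2 (continuous_iff_continuousAt.2 fun x => (avg_hasFDerivAt a g x).continuousAt)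
  | succ n ih =>
    intro F _ _ a g
    rw [Nat.cast_add, Nat.cast_one, contDiff_succ_iff_fderiv]
    refine ⟨fun x => (avg_hasFDerivAt a g x).differentiableAt, by simp, ?_⟩
    rw [show fderiv ℝ (avg a g) = avg a (SchwartzMap.fderivCLM ℝ (Euc d) F g) from
      funext fun x => (avg_hasFDerivAt a g x).fderiv]
    exact ih a _

lemma g_lip (A : ℝ) (k : ℕ) (g : SchwartzMap (Euc d) F) :
    ∃ C₁ C₂ : ℝ, 0 ≤ C₁ ∧ 0 ≤ C₂ ∧ ∀ a ∈ Icc 0 A, ∀ b ∈ Icc 0 A, ∀ x z : Euc d,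
      ‖x‖ ^ k * ‖g (x - a • z) - g (x - b • z)‖ ≤ (C₁ * ‖z‖ + C₂ * ‖z‖ ^ (k + 1)) * |a - b| := by
  set g' := SchwartzMap.fderivCLM ℝ (Euc d) F g with hg'
  set S₀ := SchwartzMap.seminorm ℝ 0 0 g'
  set S₁ := SchwartzMap.seminorm ℝ k 0 g'
  refine ⟨2 ^ (k - 1) * S₁, 2 ^ (k - 1) * (|A| ^ k * S₀), by positivity, by positivity, ?_⟩
  intro a ha b hb x z
  have key := Convex.norm_image_sub_le_of_norm_hasDerivWithin_le
    (f := fun c : ℝ => ‖x‖ ^ k • g (x - c • z))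
    (f' := fun c : ℝ => ‖x‖ ^ k • (g' (x - c • z) (-z)))
    (s := Icc 0 A)
    (C := (2 ^ (k - 1) * S₁ * ‖z‖ + 2 ^ (k - 1) * (|A| ^ k * S₀) * ‖z‖ ^ (k + 1)))
    ?_ ?_ (convex_Icc 0 A) hb ha
  · rw [← smul_sub, norm_smul] at key
    simpa using key
  · intro c hc
    have h1 : HasDerivAt (fun c : ℝ => x - c • z) (-z) c := by
      simpa using ((hasDerivAt_id c).smul_const z).const_sub x
    exact (((g.hasFDerivAt (x - c • z)).comp_hasDerivAt c h1).const_smul _).hasDerivWithinAt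
  · intro c hc
    have hx : ‖x‖ ≤ ‖x - c • z‖ + |A| * ‖z‖ := by
      calc ‖x‖ = ‖(x - c • z) + c • z‖ := by simp
        _ ≤ ‖x - c • z‖ + ‖c • z‖ := norm_add_le _ _
        _ ≤ _ := by
          rw [norm_smul, Real.norm_of_nonneg hc.1]
          gcongr
          exact hc.2.trans (le_abs_self A)
    have hxk : ‖x‖ ^ k ≤ 2 ^ (k - 1) * (‖x - c • z‖ ^ k + (|A| * ‖z‖) ^ k) :=
      (pow_le_pow_left₀ (norm_nonneg _) hx k).trans
        (add_pow_le (by positivity) (by positivity) k)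
    rw [norm_smul, norm_pow, norm_norm]
    have hop : ‖g' (x - c • z) (-z)‖ ≤ ‖g' (x - c • z)‖ * ‖z‖ := by
      simpa using (g' (x - c • z)).le_opNorm (-z)
    have e0 := SchwartzMap.norm_le_seminorm ℝ g' (x - c • z)
    have e1 := SchwartzMap.norm_pow_mul_le_seminorm ℝ g' k (x - c • z)
    calc ‖x‖ ^ k * ‖g' (x - c • z) (-z)‖
        ≤ (2 ^ (k - 1) * (‖x - c • z‖ ^ k + (|A| * ‖z‖) ^ k)) * (‖g' (x - c • z)‖ * ‖z‖) := by
          gcongr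
      _ = 2 ^ (k - 1) * ((‖x - c • z‖ ^ k * ‖g' (x - c • z)‖) +
            |A| ^ k * ‖z‖ ^ k * ‖g' (x - c • z)‖) * ‖z‖ := by ring
      _ ≤ 2 ^ (k - 1) * (S₁ + |A| ^ k * ‖z‖ ^ k * S₀) * ‖z‖ := by gcongr
      _ = _ := by ring

lemma avg_lip_zero (A : ℝ) (k : ℕ) (g : SchwartzMap (Euc d) F) :
    ∃ C : ℝ, 0 ≤ C ∧ ∀ a ∈ Icc 0 A, ∀ b ∈ Icc 0 A, ∀ x : Euc d,
      ‖x‖ ^ k * ‖avg a g x - avg b g x‖ ≤ C * |a - b| := by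
  obtain ⟨C₁, C₂, h₁, h₂, H⟩ := g_lip A k g
  refine ⟨∫ z : Euc d, (C₁ * (‖z‖ ^ 1 * gam d z) + C₂ * (‖z‖ ^ (k + 1) * gam d z)), ?_, ?_⟩
  · refine integral_nonneg fun z => ?_
    have := gam_nonneg d z
    positivity
  intro a ha b hb x
  have hi : Integrable (fun z : Euc d =>
      (C₁ * (‖z‖ ^ 1 * gam d z) + C₂ * (‖z‖ ^ (k + 1) * gam d z))) :=
    ((gam_integrable_pow d 1).const_mul _).add ((gam_integrable_pow d (k+1)).const_mul _)
  have e : ‖x‖ ^ k * ‖avg a g x - avg b g x‖ =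
      ‖∫ z, ‖x‖ ^ k • (gam d z • g (x - a • z) - gam d z • g (x - b • z))‖ := by
    rw [integral_smul, norm_smul, integral_sub (avg_integrable a g x) (avg_integrable b g x)]
    simp [avg]
  rw [e, ← integral_mul_const]
  refine norm_integral_le_of_norm_le (hi.mul_const _) (Eventually.of_forall fun z => ?_)
  rw [← smul_sub, norm_smul, norm_smul, Real.norm_of_nonneg (gam_nonneg d z), norm_pow, norm_norm]
  have := mul_le_mul_of_nonneg_left (H a ha b hb x z) (gam_nonneg d z)
  calc _ = gam d z * (‖x‖ ^ k * ‖g (x - a • z) - g (x - b • z)‖) := by ring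
    _ ≤ _ := this
    _ = _ := by ring

lemma avg_lip (A : ℝ) (k n : ℕ) : ∀ {F : Type} [NormedAddCommGroup F] [NormedSpace ℝ F]
    (g : SchwartzMap (Euc d) F), ∃ C : ℝ, 0 ≤ C ∧ ∀ a ∈ Icc 0 A, ∀ b ∈ Icc 0 A, ∀ x : Euc d,
      ‖x‖ ^ k * ‖iteratedFDeriv ℝ n (fun y => avg a g y - avg b g y) x‖ ≤ C * |a - b| := by
  induction n with
  | zero =>
    intro F _ _ g
    simpa [norm_iteratedFDeriv_zero] using avg_lip_zero A k g
  | succ n ih =>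
    intro F _ _ g
    obtain ⟨C, hC, H⟩ := ih (SchwartzMap.fderivCLM ℝ (Euc d) F g)
    refine ⟨C, hC, fun a ha b hb x => ?_⟩
    rw [← norm_iteratedFDeriv_fderiv]
    have : fderiv ℝ (fun y => avg a g y - avg b g y) = fun y =>
        avg a (SchwartzMap.fderivCLM ℝ (Euc d) F g) y -
        avg b (SchwartzMap.fderivCLM ℝ (Euc d) F g) y :=
      funext fun y => ((avg_hasFDerivAt a g y).sub (avg_hasFDerivAt b g y)).fderiv
    rw [this]
    exact H a ha b hb x

lemma avg_decay [CompleteSpace F] (a : ℝ) (ha : 0 ≤ a) (g : SchwartzMap (Euc d) F) (k n : ℕ) :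
    ∃ C : ℝ, ∀ x : Euc d, ‖x‖ ^ k * ‖iteratedFDeriv ℝ n (avg a g) x‖ ≤ C := by
  obtain ⟨C, hC, H⟩ := avg_lip a k n g
  refine ⟨C * |a - 0| + SchwartzMap.seminorm ℝ k n g, fun x => ?_⟩
  have h1 := H a ⟨ha, le_rfl⟩ 0 ⟨le_rfl, ha⟩ x
  have h2 := SchwartzMap.le_seminorm ℝ k n g x
  have e : avg a g = (fun y => avg a g y - avg 0 g y) + g := by
    funext y; simp [avg_zero]
  have e2 : iteratedFDeriv ℝ n (avg a g) x =
      iteratedFDeriv ℝ n (fun y => avg a g y - avg 0 g y) x + iteratedFDeriv ℝ n g x := by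
    conv_lhs => rw [e]
    apply iteratedFDeriv_add_apply
    · exact ((avg_contDiff n a g).sub (avg_contDiff n 0 g)).contDiffAt
    · exact (g.smooth n).contDiffAt
  rw [e2]
  calc _ ≤ ‖x‖ ^ k * (‖iteratedFDeriv ℝ n (fun y => avg a g y - avg 0 g y) x‖ +
        ‖iteratedFDeriv ℝ n g x‖) := by gcongr; exact norm_add_le _ _
    _ ≤ _ := by rw [mul_add]; exact add_le_add h1 h2

/-- Gaussian average as a Schwartz function. -/
def avgS [CompleteSpace F] (g : SchwartzMap (Euc d) F) (a : ℝ) : SchwartzMap (Euc d) F where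
  toFun := avg (max a 0) g
  smooth' := contDiff_infty.2 fun n => avg_contDiff n _ g
  decay' := fun k n => avg_decay _ (le_max_right _ _) g k n

lemma avgS_apply [CompleteSpace F] (g : SchwartzMap (Euc d) F) (a : ℝ) (ha : 0 ≤ a) (x : Euc d) :
    avgS g a x = avg a g x := by
  change avg (max a 0) g x = _
  rw [max_eq_left ha]

lemma avgS_continuous [CompleteSpace F] (g : SchwartzMap (Euc d) F) :
    Continuous (avgS g) := by
  rw [continuous_iff_continuousAt]
  intro a
  unfold ContinuousAt
  rw [(schwartz_withSeminorms ℝ (Euc d) F).tendsto_nhds _ _]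
  rintro ⟨k, n⟩ ε hε
  obtain ⟨C, hC, H⟩ := avg_lip (max a 0 + 1) k n g
  have hev : ∀ᶠ b in nhds a, C * |max b 0 - max a 0| < ε ∧ max b 0 < max a 0 + 1 := by
    have c1 : Continuous fun b : ℝ => C * |max b 0 - max a 0| := by fun_prop
    have c2 : Continuous fun b : ℝ => max b 0 := by fun_prop
    exact ((c1.tendsto a).eventually_lt_const (by simpa using hε)).and
      ((c2.tendsto a).eventually_lt_const (by simp))
  filter_upwards [hev] with b hb
  refine lt_of_le_of_lt (SchwartzMap.seminorm_le_bound ℝ k n _ (by positivity) fun x => ?_) hb.1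
  exact H (max b 0) ⟨le_max_right _ _, hb.2.le⟩ (max a 0) ⟨le_max_right _ _, by simp⟩ x

end avg

/-! ### Composition of Schwartz functions with smooth functions vanishing at zero -/

section comp

variable {E : Type} [NormedAddCommGroup E] [NormedSpace ℝ E]

lemma comp_bound {a b : ℝ} (hab : a < b) {G : ℝ → ℝ} (hG : ContDiffOn ℝ (⊤ : ℕ∞) G (Icc a b))
    (n : ℕ) : ∃ C : ℝ, 0 ≤ C ∧ ∀ i ≤ n, ∀ y ∈ Icc a b,
      ‖iteratedFDerivWithin ℝ i G (Icc a b) y‖ ≤ C := by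
  have h : ∀ i : ℕ, ∃ C : ℝ, 0 ≤ C ∧ ∀ y ∈ Icc a b, ‖iteratedFDerivWithin ℝ i G (Icc a b) y‖ ≤ C := by
    intro i
    have hc := hG.continuousOn_iteratedFDerivWithin (m := i) (by exact_mod_cast le_top)
      (uniqueDiffOn_Icc hab)
    obtain ⟨C, hC⟩ := isCompact_Icc.exists_bound_of_continuousOn hc
    exact ⟨max C 0, le_max_right _ _, fun y hy => (hC y hy).trans (le_max_left _ _)⟩
  choose C h0 hC using h
  refine ⟨∑ i ∈ Finset.range (n + 1), C i, Finset.sum_nonneg fun i _ => h0 i, fun i hi y hy => ?_⟩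
  exact (hC i y hy).trans (Finset.single_le_sum (f := C) (fun i _ => h0 i)
    (Finset.mem_range.2 (Nat.lt_succ_of_le hi)))

lemma comp_est {a b : ℝ} (ha : a < 0) (hb : 0 < b) {G : ℝ → ℝ}
    (hG : ContDiffOn ℝ (⊤ : ℕ∞) G (Icc a b)) (hG0 : G 0 = 0) (k n : ℕ) :
    ∃ C : ℝ, 0 ≤ C ∧ ∀ f : SchwartzMap E ℝ, (∀ x, f x ∈ Icc a b) → ∀ M K : ℝ, 0 ≤ M → 0 ≤ K →
      (∀ i ≤ n, ∀ x, (1 + ‖x‖) ^ (k * (n + 1)) * ‖iteratedFDeriv ℝ i f x‖ ≤ M) →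
      (∀ i, 1 ≤ i → i ≤ n → M ≤ K ^ i) →
      ∀ x, ‖x‖ ^ k * ‖iteratedFDeriv ℝ n (fun x => G (f x)) x‖ ≤ C * (M + n * K ^ n) := by
  have hab := ha.trans hb
  rcases Nat.eq_zero_or_pos n with rfl | hn
  · obtain ⟨C, hC0, hC⟩ := comp_bound hab hG 1
    refine ⟨C, hC0, fun f hf M K hM hK h1 h2 x => ?_⟩
    have hd : DifferentiableOn ℝ G (Icc a b) := hG.differentiableOn (by simp)
    have key := (convex_Icc a b).norm_image_sub_le_of_norm_fderivWithin_le (𝕜 := ℝ) (f := G)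
      (C := C) hd (fun y hy => ?_) (⟨ha.le, hb.le⟩ : (0:ℝ) ∈ Icc a b) (hf x)
    · have h3 := h1 0 le_rfl x
      simp only [norm_iteratedFDeriv_zero, zero_add, mul_one] at h3 ⊢
      rw [hG0, sub_zero, sub_zero] at key
      calc ‖x‖ ^ k * ‖G (f x)‖ ≤ (1 + ‖x‖) ^ k * (C * ‖f x‖) := by gcongr; linarith
        _ = C * ((1 + ‖x‖) ^ k * ‖f x‖) := by ring
        _ ≤ C * M := by gcongr
        _ ≤ _ := by simp
    · have := hC 1 le_rfl y hy
      rwa [norm_iteratedFDerivWithin_one _ ((uniqueDiffOn_Icc hab) y hy)] at this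
  · obtain ⟨C, hC0, hC⟩ := comp_bound hab hG n
    refine ⟨n.factorial * C, by positivity, fun f hf M K hM hK h1 h2 x => ?_⟩
    have hx1 : (0:ℝ) < 1 + ‖x‖ := by positivity
    have hx2 : (1:ℝ) ≤ 1 + ‖x‖ := by simp
    have key := norm_iteratedFDerivWithin_comp_le (g := G) (f := f) (n := n) (s := univ)
      (t := Icc a b) (x := x) (N := (⊤ : ℕ∞)) (C := C) (D := K / (1 + ‖x‖) ^ k) hG (f.smooth ⊤).contDiffOn
      (by exact_mod_cast le_top) (uniqueDiffOn_Icc hab) uniqueDiffOn_univ (fun y _ => hf y)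
      (mem_univ x) (fun i hi => hC i hi _ (hf x)) ?_
    · rw [iteratedFDerivWithin_univ] at key
      have hn1 : (1:ℝ) ≤ n := by exact_mod_cast hn
      have e1 : ‖x‖ ^ k * (K / (1 + ‖x‖) ^ k) ^ n ≤ K ^ n := by
        rw [div_pow, mul_div_assoc', div_le_iff₀ (by positivity), mul_comm]
        gcongr
        calc ‖x‖ ^ k ≤ (1 + ‖x‖) ^ k := by gcongr; linarith
          _ ≤ _ := le_self_pow₀ (one_le_pow₀ hx2) hn.ne'
      have e2 : K ^ n ≤ M + n * K ^ n := by
        have : 0 ≤ K ^ n := by positivity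
        nlinarith
      calc ‖x‖ ^ k * ‖iteratedFDeriv ℝ n (fun x => G (f x)) x‖
          ≤ ‖x‖ ^ k * (n.factorial * C * (K / (1 + ‖x‖) ^ k) ^ n) := by
            gcongr
            exact key
        _ = n.factorial * C * (‖x‖ ^ k * (K / (1 + ‖x‖) ^ k) ^ n) := by ring
        _ ≤ _ := by
          gcongr
          exact e1.trans e2
    · intro i hi1 hi
      rw [iteratedFDerivWithin_univ, div_pow, le_div_iff₀ (by positivity), mul_comm]
      refine le_trans ?_ ((h1 i hi x).trans (h2 i hi1 hi))
      gcongr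
      rw [← pow_mul]
      exact pow_le_pow_right₀ hx2 (Nat.mul_le_mul_left k (hi.trans (Nat.le_succ n)))

lemma schwartz_M (f : SchwartzMap E ℝ) (k n : ℕ) : ∀ i ≤ n, ∀ x : E,
    (1 + ‖x‖) ^ k * ‖iteratedFDeriv ℝ i f x‖ ≤
      2 ^ k * (Finset.Iic (k, n)).sup (schwartzSeminormFamily ℝ E ℝ) f :=
  fun _ hi x => SchwartzMap.one_add_le_sup_seminorm_apply (𝕜 := ℝ) (m := (k, n)) le_rfl hi f x

/-- Existence of the composition as a Schwartz function. -/
lemma exists_comp {a b : ℝ} (ha : a < 0) (hb : 0 < b) {G : ℝ → ℝ}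
    (hG : ContDiffOn ℝ (⊤ : ℕ∞) G (Icc a b)) (hG0 : G 0 = 0) (f : SchwartzMap E ℝ)
    (hf : ∀ x, f x ∈ Icc a b) : ∃ W : SchwartzMap E ℝ, ∀ x, W x = G (f x) := by
  refine ⟨⟨fun x => G (f x), ?_, fun k n => ?_⟩, fun x => rfl⟩
  · have := hG.comp (f.smooth ⊤).contDiffOn (s := univ) (fun x _ => hf x)
    exact contDiffOn_univ.1 this
  · obtain ⟨C, hC0, hC⟩ := comp_est (E := E) ha hb hG hG0 k n
    set M := 2 ^ (k * (n + 1)) *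
      (Finset.Iic (k * (n + 1), n)).sup (schwartzSeminormFamily ℝ E ℝ) f with hM
    have hM0 : 0 ≤ M := by positivity
    refine ⟨_, hC f hf M (max M 1) hM0 (by positivity) (schwartz_M f _ n) fun i hi _ => ?_⟩
    exact (le_max_left M 1).trans (le_self_pow₀ (le_max_right _ _) (by omega))

lemma tendsto_comp {ι : Type} {l : Filter ι} {a b : ℝ} (ha : a < 0) (hb : 0 < b) {G : ℝ → ℝ}
    (hG : ContDiffOn ℝ (⊤ : ℕ∞) G (Icc a b)) (hG0 : G 0 = 0) (f W : ι → SchwartzMap E ℝ)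
    (hf : Tendsto f l (nhds 0)) (hW : ∀ᶠ t in l, ∀ x, W t x = G (f t x)) :
    Tendsto W l (nhds 0) := by
  have hr : ∀ᶠ t in l, ∀ x, f t x ∈ Icc a b := by
    have := ((schwartz_withSeminorms ℝ E ℝ).tendsto_nhds f 0).1 hf (0, 0) (min (-a) b)
      (lt_min (by linarith) hb)
    filter_upwards [this] with t ht x
    rw [sub_zero] at ht
    have h1 := (SchwartzMap.norm_le_seminorm ℝ (f t) x).trans_lt ht
    rw [Real.norm_eq_abs, abs_lt] at h1
    have h2 := min_le_left (-a) b
    have h3 := min_le_right (-a) b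
    constructor <;> linarith
  rw [(schwartz_withSeminorms ℝ E ℝ).tendsto_nhds]
  rintro ⟨k, n⟩ ε hε
  obtain ⟨C, hC0, hC⟩ := comp_est (E := E) ha hb hG hG0 k n
  obtain ⟨δ, hδ0, hδ1, hδ⟩ : ∃ δ : ℝ, 0 < δ ∧ δ ≤ 1 ∧ C * (δ + n * δ) < ε := by
    refine ⟨min 1 (ε / (2 * ((C + 1) * (1 + n)))), by positivity, min_le_left _ _, ?_⟩
    have h := min_le_right 1 (ε / (2 * ((C + 1) * (1 + n))))
    set δ := min 1 (ε / (2 * ((C + 1) * (1 + n))))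
    have h0 : 0 < δ := by positivity
    rw [le_div_iff₀ (by positivity)] at h
    have : 0 ≤ δ * (1 + n) := by positivity
    nlinarith
  have hsup : ∀ᶠ t in l, 2 ^ (k * (n + 1)) *
      (Finset.Iic (k * (n + 1), n)).sup (schwartzSeminormFamily ℝ E ℝ) (f t) < δ ^ (n + 1) := by
    have := ((schwartz_withSeminorms ℝ E ℝ).tendsto_nhds' f 0).1 hf
      (Finset.Iic (k * (n + 1), n)) (δ ^ (n + 1) / 2 ^ (k * (n + 1))) (by positivity)
    filter_upwards [this] with t ht
    rw [sub_zero, lt_div_iff₀ (by positivity)] at ht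
    rwa [mul_comm]
  filter_upwards [hr, hW, hsup] with t h1 h2 h3
  rw [sub_zero]
  have h4 := hC (f t) h1 (δ ^ (n + 1)) δ (by positivity) hδ0.le
    (fun i hi x => (schwartz_M (f t) _ n i hi x).trans h3.le)
    (fun i _ hi => pow_le_pow_of_le_one hδ0.le hδ1 (by omega))
  have h5 : δ ^ (n + 1) + n * δ ^ n ≤ δ + n * δ := by
    have e1 : δ ^ (n + 1) ≤ δ := pow_le_of_le_one hδ0.le hδ1 (by omega)
    rcases Nat.eq_zero_or_pos n with rfl | hn
    · simp
    · have e2 : δ ^ n ≤ δ := pow_le_of_le_one hδ0.le hδ1 (by omega)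
      gcongr
  refine lt_of_le_of_lt (SchwartzMap.seminorm_le_bound ℝ k n (W t) (M := C * (δ + n * δ))
    (by positivity) fun x => ?_) hδ
  rw [show (W t : E → ℝ) = fun x => G (f t x) from funext h2]
  exact (h4 x).trans (by gcongr)

end comp

/-! ### Heat semigroup -/

section heat

variable {d : ℕ}

/-- Partial derivative on Schwartz space. -/
def dd (i : Fin d) : SchwartzMap (Euc d) ℝ →L[ℝ] SchwartzMap (Euc d) ℝ :=
  (SchwartzMap.evalCLM ℝ (Euc d) ℝ (EuclideanSpace.single i 1)) ∘L
    (SchwartzMap.fderivCLM ℝ (Euc d) ℝ)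

lemma dd_apply (i : Fin d) (f : SchwartzMap (Euc d) ℝ) (x : Euc d) :
    dd i f x = fderiv ℝ f x (EuclideanSpace.single i 1) := rfl

/-- Laplacian on Schwartz space. -/
def lapS : SchwartzMap (Euc d) ℝ →L[ℝ] SchwartzMap (Euc d) ℝ := ∑ i : Fin d, (dd i) ∘L (dd i)

lemma lapS_apply (f : SchwartzMap (Euc d) ℝ) (x : Euc d) :
    lapS f x = ∑ i, dd i (dd i f) x := by
  simp [lapS]

lemma heat_rep {α t : ℝ} (hα : 0 < α) (ht : 0 ≤ t) (g : SchwartzMap (Euc d) ℝ) (x : Euc d) :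
    heatP d α t (fun y => 1 + g y) x = 1 + avg (√(α * t)) g x := by
  unfold heatP
  split_ifs with h0
  · simp [h0, avg_zero]
  have ht' : 0 < t := lt_of_le_of_ne ht (Ne.symm h0)
  set a := √(α * t) with ha
  have ha0 : 0 < a := by positivity
  have ha2 : a ^ 2 = α * t := Real.sq_sqrt (by positivity)
  set H : Euc d → ℝ := fun y => (2 * π * α * t) ^ (-(d : ℝ) / 2) *
    Real.exp (-‖x - y‖ ^ 2 / (2 * α * t)) * (1 + g y) with hH
  have h1 : ∫ y, H y = ∫ y, H (x - y) := (integral_sub_left_eq_self H volume x).symm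
  have h2 := Measure.integral_comp_smul (volume : Measure (Euc d)) (fun y => H (x - y)) a
  rw [finrank_euclideanSpace_fin, abs_of_pos (by positivity), smul_eq_mul] at h2
  have h3 : ∫ y, H (x - y) = a ^ d * ∫ z, H (x - a • z) := by
    rw [h2]; field_simp
  have hc : a ^ d * (2 * π * α * t) ^ (-(d : ℝ) / 2) = (2 * π) ^ (-(d : ℝ) / 2) := by
    rw [show 2 * π * α * t = (2 * π) * a ^ 2 by rw [ha2]; ring,
      Real.mul_rpow (by positivity) (by positivity), ← Real.rpow_natCast a 2, ← Real.rpow_mul ha0.le,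
      ← Real.rpow_natCast a d, mul_left_comm, ← Real.rpow_add ha0]
    rw [show (d:ℝ) + ((2:ℕ):ℝ) * (-(d:ℝ)/2) = 0 by push_cast; ring]
    simp
  have h4 : a ^ d * ∫ z, H (x - a • z) = ∫ z, (gam d z + gam d z • g (x - a • z)) := by
    rw [← integral_const_mul]
    congr 1
    funext z
    simp only [hH, gam, sub_sub_cancel, norm_smul, Real.norm_of_nonneg ha0.le, mul_pow, ha2,
      smul_eq_mul, ← hc]
    rw [show -(α * t * ‖z‖ ^ 2) / (2 * α * t) = -‖z‖ ^ 2 / 2 by field_simp]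
    ring
  rw [h1, h3, h4, integral_add (gam_integrable d) (avg_integrable a g x), gam_integral]
  rfl

lemma avg_lower (a c : ℝ) (g : SchwartzMap (Euc d) ℝ) (hg : ∀ y, c ≤ 1 + g y) (x : Euc d) :
    c ≤ 1 + avg a g x := by
  have h : 1 + avg a g x = ∫ z, (gam d z + gam d z • g (x - a • z)) := by
    rw [integral_add (gam_integrable d) (avg_integrable a g x), gam_integral]
    rfl
  have h2 : c = ∫ z, gam d z * c := by rw [integral_mul_const, gam_integral, one_mul]
  rw [h, h2]
  refine integral_mono ((gam_integrable d).mul_const c)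
    ((gam_integrable d).add (avg_integrable a g x)) fun z => ?_
  have := mul_le_mul_of_nonneg_left (hg (x - a • z)) (gam_nonneg d z)
  simp only [smul_eq_mul]
  linarith

lemma avg_dd (a : ℝ) (i : Fin d) (g : SchwartzMap (Euc d) ℝ) (x : Euc d) :
    fderiv ℝ (avg a g) x (EuclideanSpace.single i 1) = avg a (dd i g) x := by
  rw [(avg_hasFDerivAt a g x).fderiv]
  unfold avg
  rw [ContinuousLinearMap.integral_apply (avg_integrable a _ x)]
  rfl

lemma avgS_dd (a : ℝ) (i : Fin d) (g : SchwartzMap (Euc d) ℝ) :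
    dd i (avgS g a) = avgS (dd i g) a := by
  ext x
  exact avg_dd _ i g x

lemma avg_lapS (a : ℝ) (g : SchwartzMap (Euc d) ℝ) (x : Euc d) :
    avg a (lapS g) x = ∑ i, avg a (dd i (dd i g)) x := by
  unfold avg
  rw [← integral_finsetSum _ fun i _ => avg_integrable a _ x]
  simp [lapS_apply, Finset.mul_sum]

lemma lapS_avgS (a : ℝ) (g : SchwartzMap (Euc d) ℝ) (x : Euc d) :
    lapS (avgS g a) x = avgS (lapS g) a x := by
  rw [lapS_apply]
  simp only [avgS_dd]
  exact (avg_lapS _ g x).symm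

lemma gam_coord_integrable (a : ℝ) (i : Fin d) (g : SchwartzMap (Euc d) ℝ) (x : Euc d) :
    Integrable (fun z => gam d z * z i * g (x - a • z)) := by
  refine ((gam_integrable_pow d 1).mul_const (SchwartzMap.seminorm ℝ 0 0 g)).mono'
    (((gam_continuous d).mul (by fun_prop)).mul
      (g.continuous.comp (by fun_prop))).aestronglyMeasurable
    (Eventually.of_forall fun z => ?_)
  rw [norm_mul, norm_mul, Real.norm_of_nonneg (gam_nonneg d z), pow_one, mul_comm ‖z‖]
  have h1 := SchwartzMap.norm_le_seminorm ℝ g (x - a • z)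
  have h2 : ‖z i‖ ≤ ‖z‖ := PiLp.norm_apply_le z i
  have := gam_nonneg d z
  gcongr

lemma ibp (a : ℝ) (i : Fin d) (g : SchwartzMap (Euc d) ℝ) (x : Euc d) :
    ∫ z, gam d z * z i * g (x - a • z) = -a * avg a (dd i g) x := by
  have hγ : ∀ z, fderiv ℝ (gam d) z (EuclideanSpace.single i 1) = -(gam d z * z i) := by
    intro z
    rw [(gam_hasFDerivAt d z).fderiv]
    simp [EuclideanSpace.inner_single_right]
  have hg : ∀ z, HasFDerivAt (fun z => g (x - a • z))
      ((fderiv ℝ g (x - a • z)).comp (-(a • ContinuousLinearMap.id ℝ (Euc d)))) z := by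
    intro z
    have h1 : HasFDerivAt (fun z : Euc d => x - a • z) (-(a • ContinuousLinearMap.id ℝ (Euc d))) z :=
      ((hasFDerivAt_id z).const_smul a).const_sub x
    exact (g.hasFDerivAt (x - a • z)).comp z h1
  have hg2 : ∀ z, fderiv ℝ (fun z => g (x - a • z)) z (EuclideanSpace.single i 1) =
      -a * dd i g (x - a • z) := by
    intro z
    rw [(hg z).fderiv, dd_apply]
    simp
  have key := integral_mul_fderiv_eq_neg_fderiv_mul_of_integrable (μ := (volume : Measure (Euc d)))
    (f := gam d) (g := fun z => g (x - a • z)) (v := EuclideanSpace.single i 1) ?_ ?_ ?_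
    (fun z _ => (gam_hasFDerivAt d z).differentiableAt) (fun z _ => (hg z).differentiableAt)
  · simp only [hγ, hg2] at key
    have e1 : ∫ z, gam d z * (-a * dd i g (x - a • z)) = -a * avg a (dd i g) x := by
      unfold avg
      rw [← integral_const_mul]
      congr 1; funext z; simp only [smul_eq_mul]; ring
    rw [← e1, key, ← integral_neg]
    congr 1; funext z; ring
  · simp only [hγ]
    refine (gam_coord_integrable a i g x).neg.congr (Eventually.of_forall fun z => ?_)
    simp
  · simp only [hg2]
    refine ((avg_integrable a (dd i g) x).const_mul (-a)).congr (Eventually.of_forall fun z => ?_)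
    simp only [smul_eq_mul]; ring
  · exact avg_integrable a g x

lemma avg_hasDerivAt (a : ℝ) (g : SchwartzMap (Euc d) ℝ) (x : Euc d) :
    HasDerivAt (fun a => avg a g x) (a * avg a (lapS g) x) a := by
  have hexp : ∀ b : ℝ, ∀ z : Euc d, gam d z • fderiv ℝ g (x - b • z) (-z) =
      ∑ i, -(gam d z * z i * dd i g (x - b • z)) := by
    intro b z
    have hz : z = ∑ i, z i • (EuclideanSpace.single i (1:ℝ)) := by
      ext j; simp [Finset.sum_apply, Pi.single_apply]
    rw [map_neg]
    conv_lhs => rw [show fderiv ℝ g (x - b • z) z = fderiv ℝ g (x - b • z)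
      (∑ i, z i • (EuclideanSpace.single i (1:ℝ))) by rw [← hz]]
    rw [map_sum]
    simp only [map_smul, smul_eq_mul, ← dd_apply, mul_neg, Finset.mul_sum, Finset.sum_neg_distrib]
    congr 1
    refine Finset.sum_congr rfl fun i _ => by ring
  set S := SchwartzMap.seminorm ℝ 0 0 (SchwartzMap.fderivCLM ℝ (Euc d) ℝ g)
  have key := hasDerivAt_integral_of_dominated_loc_of_deriv_le (μ := (volume : Measure (Euc d)))
    (F := fun b z => gam d z • g (x - b • z))
    (F' := fun b z => gam d z • fderiv ℝ g (x - b • z) (-z)) (x₀ := a) (s := univ)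
    (bound := fun z => ‖z‖ ^ 1 * gam d z * S) univ_mem
    (Eventually.of_forall fun b => (avg_integrable b g x).aestronglyMeasurable)
    (avg_integrable a g x) ?_ ?_ ((gam_integrable_pow d 1).mul_const S) ?_
  · have h := key.2
    refine h.congr_deriv ?_
    simp only [hexp]
    have hi : ∀ i, Integrable (fun z => -(gam d z * z i * dd i g (x - a • z))) :=
      fun i => (gam_coord_integrable a i (dd i g) x).neg
    rw [integral_finsetSum _ fun i _ => hi i, avg_lapS,
      Finset.mul_sum]
    refine Finset.sum_congr rfl fun i _ => ?_
    rw [integral_neg, ibp]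
    ring
  · simp only [hexp]
    exact (integrable_finsetSum _ fun i _ =>
      (gam_coord_integrable a i (dd i g) x).neg).aestronglyMeasurable
  · refine Eventually.of_forall fun z b _ => ?_
    rw [norm_smul, Real.norm_of_nonneg (gam_nonneg d z), pow_one]
    have h1 := (fderiv ℝ g (x - b • z)).le_opNorm (-z)
    have h2 : ‖fderiv ℝ g (x - b • z)‖ ≤ S :=
      SchwartzMap.norm_le_seminorm ℝ (SchwartzMap.fderivCLM ℝ (Euc d) ℝ g) (x - b • z)
    rw [norm_neg] at h1
    have h3 := gam_nonneg d z
    calc _ ≤ gam d z * (S * ‖z‖) := by gcongr; exact h1.trans (by gcongr)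
      _ = _ := by ring
  · refine Eventually.of_forall fun z b _ => ?_
    have h1 : HasDerivAt (fun c : ℝ => x - c • z) (-z) b := by
      simpa using ((hasDerivAt_id b).smul_const z).const_sub x
    have h2 := ((g.hasFDerivAt (x - b • z)).comp_hasDerivAt b h1).const_smul (gam d z)
    exact h2

/-- The flow `t ↦ P_t g` in Schwartz space. -/
def flow (α : ℝ) (g : SchwartzMap (Euc d) ℝ) (t : ℝ) : SchwartzMap (Euc d) ℝ := avgS g (√(α * t))

lemma flow_apply (α : ℝ) (g : SchwartzMap (Euc d) ℝ) (t : ℝ) (x : Euc d) :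
    flow α g t x = avg (√(α * t)) g x := avgS_apply _ _ (Real.sqrt_nonneg _) x

lemma flow_continuous (α : ℝ) (g : SchwartzMap (Euc d) ℝ) : Continuous (flow α g) :=
  (avgS_continuous g).comp (by fun_prop)

lemma flow_apply_continuous (α : ℝ) (g : SchwartzMap (Euc d) ℝ) (x : Euc d) :
    Continuous (fun t => flow α g t x) := by
  have h := (SchwartzMap.toBoundedContinuousFunctionCLM ℝ (Euc d) ℝ).continuous.comp
    (flow_continuous α g)
  exact (continuous_eval_const (F := BoundedContinuousFunction (Euc d) ℝ) x).comp h

lemma lapS_flow (α : ℝ) (g : SchwartzMap (Euc d) ℝ) (t : ℝ) (x : Euc d) :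
    lapS (flow α g t) x = flow α (lapS g) t x := lapS_avgS _ g x

lemma flow_hasDerivAt {α t : ℝ} (hα : 0 < α) (ht : 0 < t) (g : SchwartzMap (Euc d) ℝ) (x : Euc d) :
    HasDerivAt (fun t => flow α g t x) (α / 2 * lapS (flow α g t) x) t := by
  simp only [lapS_flow, flow_apply]
  have h1 : HasDerivAt (fun t => √(α * t)) (α / (2 * √(α * t))) t := by
    have h0 : HasDerivAt (fun t : ℝ => α * t) α t := by
      simpa using (hasDerivAt_id t).const_mul α
    exact h0.sqrt (by positivity)
  have h2 := (avg_hasDerivAt (√(α * t)) g x).comp t h1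
  refine h2.congr_deriv ?_
  have : 0 < √(α * t) := by positivity
  field_simp

lemma flow_hasDerivWithinAt {α t : ℝ} (hα : 0 < α) (ht : 0 ≤ t) (g : SchwartzMap (Euc d) ℝ)
    (x : Euc d) :
    HasDerivWithinAt (fun t => flow α g t x) (α / 2 * lapS (flow α g t) x) (Ici 0) t := by
  rcases ht.eq_or_lt with rfl | ht
  · refine hasDerivWithinAt_Ici_of_tendsto_deriv (s := Ioi 0)
      (fun t ht => (flow_hasDerivAt hα ht g x).differentiableAt.differentiableWithinAt)
      (flow_apply_continuous α g x).continuousWithinAt self_mem_nhdsWithin ?_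
    have hc : Continuous fun t => α / 2 * lapS (flow α g t) x := by
      simp only [lapS_flow]
      exact continuous_const.mul (flow_apply_continuous α _ x)
    refine ((hc.tendsto 0).mono_left nhdsWithin_le_nhds).congr' ?_
    filter_upwards [self_mem_nhdsWithin] with t ht
    exact (flow_hasDerivAt hα ht g x).deriv.symm
  · exact (flow_hasDerivAt hα ht g x).hasDerivWithinAt

end heat

/-! ### The Cole-Hopf transform -/

section colehopf

variable {d : ℕ}

/-- The square of a Schwartz function. -/
def sqS (f : SchwartzMap (Euc d) ℝ) : SchwartzMap (Euc d) ℝ := SchwartzMap.smulLeftCLM ℝ (⇑f) f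

lemma sqS_apply (f : SchwartzMap (Euc d) ℝ) (x : Euc d) : sqS f x = f x ^ 2 := by
  rw [sqS, SchwartzMap.smulLeftCLM_apply_apply f.hasTemperateGrowth, smul_eq_mul, sq]

lemma sqS_continuous : Continuous (sqS (d := d)) := by
  rw [continuous_iff_continuousAt]
  intro f
  have h0 : Tendsto (fun g : SchwartzMap (Euc d) ℝ => g - f) (nhds f) (nhds 0) := by
    have : Continuous fun g : SchwartzMap (Euc d) ℝ => g - f := by fun_prop
    simpa using this.tendsto f
  have h1 : Tendsto (fun g : SchwartzMap (Euc d) ℝ => sqS (g - f)) (nhds f) (nhds 0) :=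
    tendsto_comp (E := Euc d) (a := -1) (b := 1) (G := fun s => s ^ 2) (by norm_num) (by norm_num)
      (by fun_prop) (by norm_num) _ _ h0 (Eventually.of_forall fun g x => sqS_apply _ x)
  have h2 : Tendsto (fun g : SchwartzMap (Euc d) ℝ => (2:ℝ) • SchwartzMap.smulLeftCLM ℝ (⇑f) (g - f))
      (nhds f) (nhds 0) := by
    have := (((SchwartzMap.smulLeftCLM ℝ (⇑f)).continuous.tendsto 0).comp h0).const_smul (2:ℝ)
    simpa using this
  have h3 := (h1.add h2).add_const (sqS f)
  simp only [add_zero, zero_add] at h3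
  refine h3.congr fun g => ?_
  ext x
  simp only [add_apply, smul_apply, sqS_apply, sub_apply,
    SchwartzMap.smulLeftCLM_apply_apply f.hasTemperateGrowth, smul_eq_mul]
  ring

lemma contDiffOn_log {α a b : ℝ} (ha : -1 < a) :
    ContDiffOn ℝ (⊤ : ℕ∞) (fun s => -α * Real.log (1 + s)) (Icc a b) := by
  refine contDiffOn_const.mul (ContDiffOn.log (by fun_prop) fun s hs => ?_)
  have := hs.1
  linarith

lemma contDiffOn_inv_one_add {a b : ℝ} (ha : -1 < a) :
    ContDiffOn ℝ (⊤ : ℕ∞) (fun s : ℝ => (1 + s)⁻¹ - 1) (Icc a b) := by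
  refine (ContDiffOn.inv (by fun_prop) fun s hs => ?_).sub contDiffOn_const
  have := hs.1
  linarith

lemma mem_Icc_of_lower {c : ℝ} (hc : 0 < c) (u : SchwartzMap (Euc d) ℝ) (hu : ∀ x, c ≤ 1 + u x)
    (x : Euc d) : u x ∈ Icc (-(1 - min c 1 / 2)) (SchwartzMap.seminorm ℝ 0 0 u + 1) := by
  have h1 := hu x
  have h2 := (le_abs_self (u x)).trans (SchwartzMap.norm_le_seminorm ℝ u x)
  have h3 := min_le_left c 1
  have h4 : 0 < min c 1 := lt_min hc one_pos
  constructor <;> linarith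

lemma exists_log {c α : ℝ} (hc : 0 < c) (u : SchwartzMap (Euc d) ℝ) (hu : ∀ x, c ≤ 1 + u x) :
    ∃ W : SchwartzMap (Euc d) ℝ, ∀ x, W x = -α * Real.log (1 + u x) := by
  have h3 := min_le_right c 1
  have h4 : 0 < min c 1 := lt_min hc one_pos
  exact exists_comp (G := fun s => -α * Real.log (1 + s)) (by linarith)
    (by have := apply_nonneg (SchwartzMap.seminorm ℝ 0 0) u; linarith)
    (contDiffOn_log (by linarith)) (by simp) u (mem_Icc_of_lower hc u hu)

lemma exists_inv {c : ℝ} (hc : 0 < c) (u : SchwartzMap (Euc d) ℝ) (hu : ∀ x, c ≤ 1 + u x) :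
    ∃ W : SchwartzMap (Euc d) ℝ, ∀ x, W x = (1 + u x)⁻¹ - 1 := by
  have h3 := min_le_right c 1
  have h4 : 0 < min c 1 := lt_min hc one_pos
  exact exists_comp (G := fun s => (1 + s)⁻¹ - 1) (by linarith)
    (by have := apply_nonneg (SchwartzMap.seminorm ℝ 0 0) u; linarith)
    (contDiffOn_inv_one_add (by linarith)) (by simp) u (mem_Icc_of_lower hc u hu)

lemma log_continuous {c α : ℝ} (hc : 0 < c) (u V : ℝ → SchwartzMap (Euc d) ℝ)
    (hu : ∀ t x, c ≤ 1 + u t x) (huc : Continuous u)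
    (hV : ∀ t x, V t x = -α * Real.log (1 + u t x)) : Continuous V := by
  rw [continuous_iff_continuousAt]
  intro s
  obtain ⟨w, hw⟩ := exists_inv hc (u s) (hu s)
  have h0 : Tendsto (fun t => u t - u s) (nhds s) (nhds 0) := by
    have : Continuous fun t => u t - u s := by fun_prop
    simpa using this.tendsto s
  have h1 : Tendsto (fun t => (u t - u s) + SchwartzMap.smulLeftCLM ℝ (⇑w) (u t - u s))
      (nhds s) (nhds 0) := by
    have := h0.add (((SchwartzMap.smulLeftCLM ℝ (⇑w)).continuous.tendsto 0).comp h0)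
    simpa using this
  have h2 : Tendsto (fun t => V t - V s) (nhds s) (nhds 0) := by
    refine tendsto_comp (E := Euc d) (a := -(1/2)) (b := 1/2)
      (G := fun s => -α * Real.log (1 + s)) (by norm_num) (by norm_num)
      (contDiffOn_log (by norm_num)) (by simp) _ _ h1 (Eventually.of_forall fun t x => ?_)
    have p1 : 0 < 1 + u s x := hc.trans_le (hu s x)
    have p2 : 0 < 1 + u t x := hc.trans_le (hu t x)
    have e : 1 + ((u t - u s) + SchwartzMap.smulLeftCLM ℝ (⇑w) (u t - u s)) x
        = (1 + u t x) / (1 + u s x) := by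
      simp only [add_apply, sub_apply,
        SchwartzMap.smulLeftCLM_apply_apply w.hasTemperateGrowth, smul_eq_mul, hw]
      field_simp
      ring
    rw [e, Real.log_div p2.ne' p1.ne', sub_apply, hV, hV]
    ring
  have h3 := h2.add_const (V s)
  simpa [ContinuousAt] using h3

lemma dd_log {c α : ℝ} (hc : 0 < c) (u V : SchwartzMap (Euc d) ℝ) (hu : ∀ x, c ≤ 1 + u x)
    (hV : ∀ x, V x = -α * Real.log (1 + u x)) (i : Fin d) (x : Euc d) :
    dd i V x = -α * (dd i u x / (1 + u x)) := by
  have p1 : 0 < 1 + u x := hc.trans_le (hu x)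
  have e : (V : Euc d → ℝ) = fun x => -α * Real.log (1 + u x) := funext hV
  have h := (((u.hasFDerivAt x).const_add 1).log p1.ne').const_mul (-α)
  rw [dd_apply, e, h.fderiv, dd_apply]
  simp only [smul_apply, smul_eq_mul]
  ring

lemma dd_dd_log {c α : ℝ} (hc : 0 < c) (u V : SchwartzMap (Euc d) ℝ) (hu : ∀ x, c ≤ 1 + u x)
    (hV : ∀ x, V x = -α * Real.log (1 + u x)) (i : Fin d) (x : Euc d) :
    dd i (dd i V) x = -α * (dd i (dd i u) x / (1 + u x) - (dd i u x / (1 + u x)) ^ 2) := by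
  have p1 : 0 < 1 + u x := hc.trans_le (hu x)
  have e : (dd i V : Euc d → ℝ) = fun x => -α * (dd i u x / (1 + u x)) :=
    funext (dd_log hc u V hu hV i)
  have h := (((dd i u).hasFDerivAt x).mul
    (((hasDerivAt_inv p1.ne').comp_hasFDerivAt x ((u.hasFDerivAt x).const_add 1)))).const_mul (-α)
  have h' : HasFDerivAt (fun x => -α * (dd i u x / (1 + u x))) _ x := h
  rw [dd_apply, e, h'.fderiv, dd_apply i (dd i u)]
  simp only [add_apply, smul_apply, smul_eq_mul, ← dd_apply, Function.comp]
  field_simp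
  ring

lemma exists_exp {α : ℝ} (φ : SchwartzMap (Euc d) ℝ) :
    ∃ g : SchwartzMap (Euc d) ℝ, ∀ x, g x = Real.exp (-φ x / α) - 1 := by
  have hM := apply_nonneg (SchwartzMap.seminorm ℝ 0 0) φ
  refine exists_comp (a := -(SchwartzMap.seminorm ℝ 0 0 φ + 1))
    (b := SchwartzMap.seminorm ℝ 0 0 φ + 1)
    (G := fun s => Real.exp (-s / α) - 1) (by linarith) (by linarith) ?_ (by simp) φ ?_
  · exact ContDiff.contDiffOn (by fun_prop)
  · intro x
    have h2 := abs_le.1 (SchwartzMap.norm_le_seminorm ℝ φ x)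
    constructor <;> linarith [h2.1, h2.2]

lemma gradient_coord (f : SchwartzMap (Euc d) ℝ) (x : Euc d) :
    ‖gradient (⇑f) x‖ ^ 2 = ∑ i, (dd i f x) ^ 2 := by
  rw [EuclideanSpace.norm_sq_eq]
  refine Finset.sum_congr rfl fun i _ => ?_
  have h : (gradient (⇑f) x) i = dd i f x := by
    rw [dd_apply]
    have := InnerProductSpace.toDual_symm_apply (𝕜 := ℝ) (x := EuclideanSpace.single i (1:ℝ))
      (y := fderiv ℝ f x)
    rw [← this]
    rw [EuclideanSpace.inner_single_right]
    simp [gradient]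
  rw [h, Real.norm_eq_abs, sq_abs]

lemma pde_identity {c α : ℝ} (hc : 0 < c) (u V : SchwartzMap (Euc d) ℝ) (hu : ∀ x, c ≤ 1 + u x)
    (hV : ∀ x, V x = -α * Real.log (1 + u x)) (x : Euc d) :
    -α * (α / 2 * lapS u x / (1 + u x)) =
      ((α / 2) • lapS V - (1 / 2 : ℝ) • ∑ i, sqS (dd i V)) x := by
  have p1 : 0 < 1 + u x := hc.trans_le (hu x)
  simp only [sub_apply, smul_apply, sum_apply, smul_eq_mul,
    sqS_apply, lapS_apply, dd_dd_log hc _ _ hu hV, dd_log hc _ _ hu hV]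
  rw [Finset.mul_sum, Finset.mul_sum, Finset.mul_sum, Finset.sum_div, Finset.mul_sum,
    ← Finset.sum_sub_distrib]
  refine Finset.sum_congr rfl fun i _ => ?_
  field_simp
  ring

end colehopf

/-- for Schwartz `φ`, `V_t φ` is Schwartz for every `t ≥ 0`, and the maps
`t ↦ V_t φ`, `t ↦ ∂_t V_t φ`, `t ↦ Δ V_t φ` and `t ↦ |∇ V_t φ|²` are continuous from `[0,∞)`
into the Schwartz space. -/
theorem statement7 (d : ℕ) (hd : 1 ≤ d) (α : ℝ) (hα : 0 < α)
    (φ : SchwartzMap (Euc d) ℝ) :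
    ∃ Vf Vt VΔ VΓ : ℝ → SchwartzMap (Euc d) ℝ,
      (∀ t ≥ (0 : ℝ), ∀ x, Vf t x = coleHopf d α t (fun y => φ y) x) ∧
      (∀ t ≥ (0 : ℝ), ∀ x,
        HasDerivWithinAt (fun s => coleHopf d α s (fun y => φ y) x) (Vt t x) (Set.Ici 0) t) ∧
      (∀ t ≥ (0 : ℝ), ∀ x, VΔ t x = lap d (coleHopf d α t (fun y => φ y)) x) ∧
      (∀ t ≥ (0 : ℝ), ∀ x, VΓ t x = ‖gradient (coleHopf d α t (fun y => φ y)) x‖ ^ 2) ∧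
      ContinuousOn Vf (Set.Ici 0) ∧ ContinuousOn Vt (Set.Ici 0) ∧
      ContinuousOn VΔ (Set.Ici 0) ∧ ContinuousOn VΓ (Set.Ici 0) := by
  obtain ⟨g, hg⟩ := exists_exp (α := α) φ
  obtain ⟨c, hc, hgc⟩ : ∃ c : ℝ, 0 < c ∧ ∀ y, c ≤ 1 + g y := by
    refine ⟨Real.exp (-(SchwartzMap.seminorm ℝ 0 0 φ) / α), Real.exp_pos _, fun y => ?_⟩
    have h2 := (le_abs_self (φ y)).trans (SchwartzMap.norm_le_seminorm ℝ φ y)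
    rw [hg, add_sub_cancel, Real.exp_le_exp]
    gcongr
  have hu : ∀ t x, c ≤ 1 + flow α g t x := fun t x => by
    rw [flow_apply]
    exact avg_lower _ c g hgc x
  choose V hV using fun t => exists_log (α := α) hc (flow α g t) (hu t)
  have hVc : Continuous V := log_continuous hc (flow α g) V hu (flow_continuous α g) hV
  have hcole : ∀ t ≥ (0 : ℝ), ∀ x, coleHopf d α t (fun y => φ y) x
      = -α * Real.log (1 + flow α g t x) := by
    intro t ht x
    have e : (fun y => Real.exp (-φ y / α)) = fun y => 1 + g y := by
      funext y
      rw [hg]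
      ring
    rw [coleHopf, e, heat_rep hα ht, flow_apply]
  have hfun : ∀ t ≥ (0 : ℝ), coleHopf d α t (fun y => φ y) = ⇑(V t) := by
    intro t ht
    funext x
    rw [hcole t ht, hV]
  have hΔc : Continuous fun t => lapS (V t) := lapS.continuous.comp hVc
  have hΓc : Continuous fun t => ∑ i, sqS (dd i (V t)) :=
    continuous_finsetSum _ fun i _ => sqS_continuous.comp ((dd i).continuous.comp hVc)
  have hTc : Continuous fun t =>
      (α / 2) • lapS (V t) - (1 / 2 : ℝ) • ∑ i, sqS (dd i (V t)) := by
    exact (hΔc.const_smul (α / 2)).sub (hΓc.const_smul (1 / 2 : ℝ))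
  refine ⟨V, fun t => (α / 2) • lapS (V t) - (1 / 2 : ℝ) • ∑ i, sqS (dd i (V t)),
    fun t => lapS (V t), fun t => ∑ i, sqS (dd i (V t)), ?_, ?_, ?_, ?_, hVc.continuousOn,
    hTc.continuousOn, hΔc.continuousOn, hΓc.continuousOn⟩
  · intro t ht x
    rw [hfun t ht]
  · intro t ht x
    have p1 : 0 < 1 + flow α g t x := hc.trans_le (hu t x)
    have h := (((flow_hasDerivWithinAt hα ht g x).const_add 1).log p1.ne').const_mul (-α)
    refine (h.congr_deriv ?_).congr (fun s hs => hcole s hs x) (hcole t ht x)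
    exact pde_identity hc _ _ (hu t) (hV t) x
  · intro t ht x
    rw [hfun t ht, lapS_apply]
    rfl
  · intro t ht x
    rw [hfun t ht, gradient_coord]
    simp [sqS_apply]
end
end

section
/- Let φ be a smooth compactly supported function on ℝ^d and let T > 0. Then there exists a constant C > 0 such that for all t ∈ [0,T] and all x ∈ ℝ^d, |(V_t φ)(x)| + |∂_t (V_t φ)(x)| + |Δ (V_t φ)(x)| + |∇ (V_t φ)(x)|² ≤ C e^{-|x|}. -/
open MeasureTheory Real Filter Set

noncomputable section

namespace CH
open Topology

/-- Gaussian weight. -/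
def w (d : ℕ) (z : Euc d) : ℝ := (2 * π) ^ (-(d : ℝ) / 2) * Real.exp (-(1/2) * ‖z‖ ^ 2)

variable {d : ℕ}

lemma w_nonneg (z : Euc d) : 0 ≤ w d z := by unfold w; positivity

lemma w_cont : Continuous (w d) := by unfold w; fun_prop

lemma w_neg (z : Euc d) : w d (-z) = w d z := by simp [w]

lemma integrable_gauss {b : ℝ} (hb : 0 < b) :
    Integrable (fun z : Euc d => Real.exp (-b * ‖z‖ ^ 2)) := by
  by_contra h
  have h1 := GaussianFourier.integral_rexp_neg_mul_sq_norm (V := Euc d) hb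
  rw [integral_undef h] at h1
  have : 0 < (π / b) ^ (Module.finrank ℝ (Euc d) / 2 : ℝ) := by positivity
  linarith

lemma w_integral : ∫ z, w d z = 1 := by
  unfold w
  rw [integral_const_mul, GaussianFourier.integral_rexp_neg_mul_sq_norm (by norm_num)]
  simp only [finrank_euclideanSpace, Fintype.card_fin]
  rw [show π / (1/2) = 2 * π by ring, ← Real.rpow_add (by positivity)]
  rw [show (-(d:ℝ)/2 + d/2) = 0 by ring, Real.rpow_zero]

lemma w_int_exp (S : ℝ) : Integrable (fun z : Euc d => w d z * Real.exp (S * ‖z‖)) := by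
  refine Integrable.mono' (((integrable_gauss (d := d) (b := 1/4) (by norm_num)).const_mul
    ((2 * π) ^ (-(d : ℝ) / 2) * Real.exp (S^2)))) ?_ ?_
  · exact (w_cont.mul (by fun_prop)).aestronglyMeasurable
  · refine Eventually.of_forall fun z => ?_
    rw [Real.norm_of_nonneg (mul_nonneg (w_nonneg z) (Real.exp_nonneg _))]
    unfold w
    rw [mul_assoc, mul_assoc, ← Real.exp_add, ← Real.exp_add]
    refine mul_le_mul_of_nonneg_left (Real.exp_le_exp.2 ?_) (by positivity)
    nlinarith [sq_nonneg (S - ‖z‖/2)]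

lemma w_int_sq_exp (S : ℝ) : Integrable (fun z : Euc d => w d z * (‖z‖^2 * Real.exp (S * ‖z‖))) := by
  refine Integrable.mono' ((w_int_exp (d := d) (S+1)).const_mul 2) ?_ ?_
  · exact (w_cont.mul (by fun_prop)).aestronglyMeasurable
  · refine Eventually.of_forall fun z => ?_
    rw [Real.norm_of_nonneg (mul_nonneg (w_nonneg z) (by positivity))]
    have h1 : ‖z‖^2 / 2 ≤ Real.exp ‖z‖ := by
      have := Real.quadratic_le_exp_of_nonneg (norm_nonneg z)
      linarith [norm_nonneg z]
    rw [add_mul, Real.exp_add, one_mul]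
    have := mul_nonneg (w_nonneg z) (Real.exp_nonneg (S*‖z‖))
    nlinarith [mul_le_mul_of_nonneg_left h1 this]

variable {F : Type*} [NormedAddCommGroup F] [NormedSpace ℝ F]

/-- rescaled heat operator -/
def H (f : Euc d → F) (s : ℝ) (x : Euc d) : F := ∫ z, w d z • f (x + s • z)

lemma decay {f : Euc d → F} (hf : Continuous f) (hs : HasCompactSupport f) :
    ∃ C, 0 ≤ C ∧ ∀ y, ‖f y‖ ≤ C * Real.exp (-‖y‖) := by
  obtain ⟨C, hC⟩ := (hs.smul_left (f := fun y => Real.exp ‖y‖)).exists_bound_of_continuous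
    (by fun_prop)
  refine ⟨C, (norm_nonneg _).trans (hC 0), fun y => ?_⟩
  have := hC y
  simp only [Pi.smul_apply', norm_smul, Real.norm_eq_abs, Real.abs_exp] at this
  rw [Real.exp_neg, ← div_eq_mul_inv, le_div_iff₀ (Real.exp_pos _)]
  linarith

lemma exp_shift {S s : ℝ} (hs : |s| ≤ S) (x z : Euc d) :
    Real.exp (-‖x + s • z‖) ≤ Real.exp (-‖x‖) * Real.exp (S * ‖z‖) := by
  rw [← Real.exp_add]
  gcongr
  have h1 : ‖x‖ ≤ ‖x + s • z‖ + ‖s • z‖ := by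
    have := norm_sub_le (x + s • z) (s • z)
    simpa using this
  rw [norm_smul, Real.norm_eq_abs] at h1
  nlinarith [mul_le_mul_of_nonneg_right hs (norm_nonneg z)]

lemma ptw {f : Euc d → F} {C : ℝ} (hC0 : 0 ≤ C) (hC : ∀ y, ‖f y‖ ≤ C * Real.exp (-‖y‖))
    {S s : ℝ} (hs : |s| ≤ S) (x z : Euc d) :
    ‖w d z • f (x + s • z)‖ ≤ (C * Real.exp (-‖x‖)) * (w d z * Real.exp (S * ‖z‖)) := by
  rw [norm_smul, Real.norm_of_nonneg (w_nonneg z)]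
  calc w d z * ‖f (x + s • z)‖ ≤ w d z * (C * (Real.exp (-‖x‖) * Real.exp (S * ‖z‖))) := by
        have := w_nonneg z
        gcongr
        exact (hC _).trans (by gcongr; exact exp_shift hs x z)
    _ = _ := by ring

lemma H_integrable {f : Euc d → F} (hf : Continuous f) {C : ℝ} (hC0 : 0 ≤ C)
    (hC : ∀ y, ‖f y‖ ≤ C * Real.exp (-‖y‖)) (s : ℝ) (x : Euc d) :
    Integrable (fun z => w d z • f (x + s • z)) := by
  refine Integrable.mono' ((w_int_exp |s|).const_mul (C * Real.exp (-‖x‖))) ?_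
    (Eventually.of_forall fun z => ptw hC0 hC le_rfl x z)
  exact (w_cont.smul (by fun_prop)).aestronglyMeasurable

lemma H_bound {f : Euc d → F} {C : ℝ} (hC0 : 0 ≤ C)
    (hC : ∀ y, ‖f y‖ ≤ C * Real.exp (-‖y‖)) {S s : ℝ} (hs : |s| ≤ S) (x : Euc d) :
    ‖H f s x‖ ≤ (C * Real.exp (-‖x‖)) * ∫ z, w d z * Real.exp (S * ‖z‖) := by
  rw [← integral_const_mul]
  exact norm_integral_le_of_norm_le ((w_int_exp S).const_mul _)
    (Eventually.of_forall fun z => ptw hC0 hC hs x z)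

lemma H_bound' {f : Euc d → F} (hf : Continuous f) (hsf : HasCompactSupport f) (S : ℝ) :
    ∃ C, 0 ≤ C ∧ ∀ s, |s| ≤ S → ∀ x, ‖H f s x‖ ≤ C * Real.exp (-‖x‖) := by
  obtain ⟨C, h0, hC⟩ := decay hf hsf
  refine ⟨C * ∫ z, w d z * Real.exp (S * ‖z‖), mul_nonneg h0
    (integral_nonneg fun z => mul_nonneg (w_nonneg z) (Real.exp_nonneg _)), fun s hs x => ?_⟩
  have := H_bound h0 hC hs x
  linarith

lemma H_fderiv [CompleteSpace F] {f : Euc d → F} (hf : ContDiff ℝ 1 f) (hsf : HasCompactSupport f)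
    (s : ℝ) (x : Euc d) : HasFDerivAt (H f s) (H (fderiv ℝ f) s x) x := by
  obtain ⟨C, h0, hC⟩ := decay hf.continuous hsf
  have hf' : Continuous (fderiv ℝ f) := hf.continuous_fderiv (by norm_num)
  obtain ⟨C', h0', hC'⟩ := decay hf' (hsf.fderiv (𝕜 := ℝ))
  unfold H
  refine hasFDerivAt_integral_of_dominated_of_fderiv_le (𝕜 := ℝ)
    (F := fun x z => w d z • f (x + s • z)) (F' := fun x z => w d z • fderiv ℝ f (x + s • z))
    (bound := fun z => C' * (w d z * Real.exp (|s| * ‖z‖))) (s := univ) univ_mem ?_ ?_ ?_ ?_ ?_ ?_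
  · exact Eventually.of_forall fun x => (H_integrable hf.continuous h0 hC s x).aestronglyMeasurable
  · exact H_integrable hf.continuous h0 hC s x
  · exact (H_integrable hf' h0' hC' s x).aestronglyMeasurable
  · refine Eventually.of_forall fun z x _ => (ptw h0' hC' le_rfl x z).trans ?_
    have h1 : Real.exp (-‖x‖) ≤ 1 := by simp
    have := mul_nonneg (w_nonneg z) (Real.exp_nonneg (|s| * ‖z‖))
    apply mul_le_mul_of_nonneg_right _ this
    nlinarith
  · exact (w_int_exp |s|).const_mul _
  · refine Eventually.of_forall fun z x _ => ?_
    have h1 : HasFDerivAt f (fderiv ℝ f (x + s • z)) (x + s • z) :=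
      (hf.differentiable (by norm_num) _).hasFDerivAt
    exact ((hasFDerivAt_comp_add_right (s • z)).2 h1).const_smul (w d z)

lemma H_apply {f : Euc d → (Euc d →L[ℝ] ℝ)} (hf : Continuous f) (hsf : HasCompactSupport f)
    (s : ℝ) (x v : Euc d) : H f s x v = H (fun y => f y v) s x := by
  obtain ⟨C, h0, hC⟩ := decay hf hsf
  unfold H
  rw [ContinuousLinearMap.integral_apply (H_integrable hf h0 hC s x)]
  rfl

lemma sym_ptw {f : Euc d → ℝ} (hf : ContDiff ℝ 2 f) {C : ℝ} (hC0 : 0 ≤ C)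
    (hC : ∀ y, ‖fderiv ℝ (fderiv ℝ f) y‖ ≤ C * Real.exp (-‖y‖))
    {S a b : ℝ} (ha : 0 ≤ a) (hab : a ≤ b) (hb : b ≤ S) (x z : Euc d) :
    |(f (x + b • z) + f (x + b • (-z))) - (f (x + a • z) + f (x + a • (-z)))| ≤
      2 * C * Real.exp (-‖x‖) * (b ^ 2 - a ^ 2) * (‖z‖ ^ 2 * Real.exp (S * ‖z‖)) := by
  have hf1 : ∀ y, HasFDerivAt f (fderiv ℝ f y) y := fun y =>
    (hf.differentiable (by norm_num) y).hasFDerivAt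
  have hf2 : Differentiable ℝ (fderiv ℝ f) :=
    (hf.fderiv_right (m := 1) (by norm_num)).differentiable (by norm_num)
  set K := C * (Real.exp (-‖x‖) * Real.exp (S * ‖z‖)) with hK
  have hK0 : 0 ≤ K := by positivity
  have key : ∀ r ∈ Icc a b, ‖fderiv ℝ f (x + r • z) z - fderiv ℝ f (x + r • (-z)) z‖
      ≤ 2 * b * ‖z‖ ^ 2 * K := by
    intro r hr
    have hr0 : 0 ≤ r := ha.trans hr.1
    have h1 : ‖fderiv ℝ f (x + r • z) - fderiv ℝ f (x + (-r) • z)‖ ≤ (K * ‖z‖) * ‖r - (-r)‖ := by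
      refine Convex.norm_image_sub_le_of_norm_hasDerivWithin_le (𝕜 := ℝ)
        (f := fun q : ℝ => fderiv ℝ f (x + q • z))
        (f' := fun q => fderiv ℝ (fderiv ℝ f) (x + q • z) z) (s := Icc (-r) r)
        (fun q _ => ?_) (fun q hq => ?_) (convex_Icc _ _) ⟨le_rfl, by linarith⟩ ⟨by linarith, le_rfl⟩
      · have h2 : HasDerivAt (fun q : ℝ => x + q • z) z q := by
          simpa using ((hasDerivAt_id q).smul_const z).const_add x
        exact ((hf2 _).hasFDerivAt.comp_hasDerivAt q h2).hasDerivWithinAt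
      · refine (ContinuousLinearMap.le_opNorm _ _).trans ?_
        gcongr
        refine (hC _).trans ?_
        rw [hK]
        gcongr
        exact exp_shift ((abs_le.2 hq).trans (hr.2.trans hb)) x z
    rw [show x + r • (-z) = x + (-r) • z by simp, ← sub_apply]
    refine (ContinuousLinearMap.le_opNorm _ _).trans ?_
    refine (mul_le_mul_of_nonneg_right h1 (norm_nonneg z)).trans ?_
    rw [Real.norm_of_nonneg (by linarith)]
    have : K * ‖z‖ * (r - -r) * ‖z‖ = r * (2 * ‖z‖^2 * K) := by ring
    rw [this]
    have : 0 ≤ 2 * ‖z‖^2 * K := by positivity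
    nlinarith [hr.2]
  have h2 := norm_image_sub_le_of_norm_deriv_le_segment' (a := a) (b := b)
    (f := fun r : ℝ => f (x + r • z) + f (x + r • (-z)))
    (f' := fun r => fderiv ℝ f (x + r • z) z - fderiv ℝ f (x + r • (-z)) z)
    (C := 2 * b * ‖z‖ ^ 2 * K) (fun r _ => ?_) (fun r hr => key r ⟨hr.1, hr.2.le⟩) b ⟨hab, le_rfl⟩
  · rw [← Real.norm_eq_abs]
    refine h2.trans ?_
    have : 2 * C * Real.exp (-‖x‖) * (b ^ 2 - a ^ 2) * (‖z‖ ^ 2 * Real.exp (S * ‖z‖))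
       = 2 * ‖z‖^2 * K * (b^2 - a^2) := by rw [hK]; ring
    rw [this]
    have h3 : 0 ≤ 2 * ‖z‖^2 * K := by positivity
    have h4 : b * (b - a) ≤ b^2 - a^2 := by nlinarith
    nlinarith [mul_le_mul_of_nonneg_left h4 h3]
  · have h5 : ∀ v : Euc d, HasDerivAt (fun q : ℝ => f (x + q • v)) (fderiv ℝ f (x + r • v) v) r := by
      intro v
      have h2 : HasDerivAt (fun q : ℝ => x + q • v) v r := by
        simpa using ((hasDerivAt_id r).smul_const v).const_add x
      exact (hf1 _).comp_hasDerivAt r h2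
    have := (h5 z).add (h5 (-z))
    rw [map_neg, ← sub_eq_add_neg] at this
    exact this.hasDerivWithinAt

lemma H_neg (f : Euc d → ℝ) (s : ℝ) (x : Euc d) :
    ∫ z, w d z • f (x + s • (-z)) = H f s x := by
  unfold H
  rw [← integral_neg_eq_self]
  simp [w_neg]

lemma H_lip {f : Euc d → ℝ} (hf : ContDiff ℝ 2 f) (hsf : HasCompactSupport f) (S : ℝ) :
    ∃ C, 0 ≤ C ∧ ∀ a b, 0 ≤ a → a ≤ b → b ≤ S → ∀ x,
      |H f b x - H f a x| ≤ C * Real.exp (-‖x‖) * (b ^ 2 - a ^ 2) := by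
  obtain ⟨C1, h10, hC1⟩ := decay hf.continuous hsf
  obtain ⟨C, h0, hC⟩ := decay ((hf.fderiv_right (m := 1) (by norm_num)).continuous_fderiv
    (by norm_num)) ((hsf.fderiv (𝕜 := ℝ)).fderiv (𝕜 := ℝ))
  have hB0 : 0 ≤ ∫ z, w d z * (‖z‖ ^ 2 * Real.exp (S * ‖z‖)) :=
    integral_nonneg fun z => mul_nonneg (w_nonneg z) (by positivity)
  refine ⟨C * ∫ z, w d z * (‖z‖ ^ 2 * Real.exp (S * ‖z‖)), mul_nonneg h0 hB0,
    fun a b ha hab hb x => ?_⟩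
  have hi := fun s => H_integrable hf.continuous h10 hC1 s x
  have hi' : ∀ s, Integrable (fun z => w d z • f (x + s • (-z))) := fun s => by
    have := (hi s).comp_neg
    simpa [w_neg] using this
  have e : 2 * (H f b x - H f a x) = ∫ z, ((w d z • f (x + b • z) + w d z • f (x + b • (-z)))
      - (w d z • f (x + a • z) + w d z • f (x + a • (-z)))) := by
    have e1 := integral_sub ((hi b).add (hi' b)) ((hi a).add (hi' a))
    simp only [Pi.add_apply] at e1
    rw [e1, integral_add (hi b) (hi' b), integral_add (hi a) (hi' a), H_neg, H_neg]
    unfold H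
    ring
  have h2 : |2 * (H f b x - H f a x)| ≤ (2 * C * Real.exp (-‖x‖) * (b ^ 2 - a ^ 2)) *
      ∫ z, w d z * (‖z‖ ^ 2 * Real.exp (S * ‖z‖)) := by
    rw [e, ← Real.norm_eq_abs, ← integral_const_mul]
    refine norm_integral_le_of_norm_le ((w_int_sq_exp S).const_mul _)
      (Eventually.of_forall fun z => ?_)
    have := sym_ptw hf h0 hC ha hab hb x z
    rw [← smul_add, ← smul_add, ← smul_sub, norm_smul, Real.norm_of_nonneg (w_nonneg z),
      Real.norm_eq_abs]
    refine (mul_le_mul_of_nonneg_left this (w_nonneg z)).trans (le_of_eq (by ring))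
  rw [abs_mul, abs_two] at h2
  linarith

lemma heatP_eq {α t : ℝ} (hα : 0 < α) (ht : 0 ≤ t) (f : Euc d → ℝ) (x : Euc d) :
    heatP d α t f x = H f (√(α * t)) x := by
  unfold heatP
  split_ifs with h
  · subst h
    simp [H, integral_mul_const, w_integral]
  · have ht' : 0 < t := lt_of_le_of_ne ht (Ne.symm h)
    have hat : 0 < α * t := by positivity
    set s := √(α * t) with hs
    have hs0 : 0 < s := Real.sqrt_pos.2 hat
    have hs2 : s ^ 2 = α * t := Real.sq_sqrt hat.le
    set g : Euc d → ℝ := fun y => (2 * π * α * t) ^ (-(d : ℝ) / 2) *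
      Real.exp (-‖x - y‖ ^ 2 / (2 * α * t)) * f y with hg
    have h1 : ∫ y, g y = ∫ y, g (x + y) := (integral_add_left_eq_self g x).symm
    have h2 := Measure.integral_comp_smul_of_nonneg volume (fun y => g (x + y)) s (hR := hs0.le)
    rw [h1]
    have h3 : ∫ y, g (x + y) = s ^ d * ∫ z, g (x + s • z) := by
      rw [h2]
      simp only [finrank_euclideanSpace, Fintype.card_fin, smul_eq_mul]
      field_simp
    rw [h3, ← integral_const_mul]
    unfold H
    congr 1
    ext z
    simp only [hg, w, smul_eq_mul]
    have e1 : ‖x - (x + s • z)‖ ^ 2 = s^2 * ‖z‖ ^ 2 := by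
      rw [sub_add_cancel_left, norm_neg, norm_smul, mul_pow, Real.norm_eq_abs, sq_abs]
    have e2 : -(s ^ 2 * ‖z‖ ^ 2) / (2 * α * t) = -(1/2) * ‖z‖^2 := by
      rw [hs2]; field_simp
    have e3 : s ^ d * (2 * π * α * t) ^ (-(d : ℝ) / 2) = (2 * π) ^ (-(d : ℝ) / 2) := by
      rw [show 2 * π * α * t = (2 * π) * s ^ 2 by rw [hs2]; ring,
        Real.mul_rpow (by positivity) (by positivity), ← Real.rpow_natCast s 2,
        ← Real.rpow_mul hs0.le, ← Real.rpow_natCast s d]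
      rw [mul_left_comm, ← Real.rpow_add hs0]
      rw [show (d:ℝ) + ((2:ℕ):ℝ) * (-(d:ℝ)/2) = 0 by push_cast; ring, Real.rpow_zero, mul_one]
    rw [e1, e2, ← e3]
    ring

lemma derivWithin_bound {f : ℝ → ℝ} {t L δ : ℝ} (hδ : 0 < δ) 
    (h : ∀ s ∈ Ici (0:ℝ), s < t + δ → |f s - f t| ≤ L * |s - t|) (ht : 0 ≤ t) :
    |derivWithin f (Ici 0) t| ≤ L := by
  have hL : 0 ≤ L := by
    have := (abs_nonneg _).trans (h (t + δ/2) (by simp; linarith) (by linarith))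
    rw [show t + δ/2 - t = δ/2 by ring, abs_of_pos (by linarith)] at this
    nlinarith
  by_cases hd : DifferentiableWithinAt ℝ f (Ici 0) t
  · have h1 := (hasDerivWithinAt_iff_tendsto_slope.1 hd.hasDerivWithinAt).mono_left
      (nhdsWithin_mono t (s := Ioi t) (fun y hy => ⟨le_trans ht (le_of_lt hy), ne_of_gt hy⟩))
    refine le_of_tendsto h1.abs ?_
    filter_upwards [Ioo_mem_nhdsGT (show t < t + δ by linarith)] with s hs
    rw [slope_def_field, abs_div, div_le_iff₀ (abs_pos.2 (by linarith [hs.1]))]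
    exact h s (ht.trans hs.1.le) hs.2
  · rw [derivWithin_zero_of_not_differentiableWithinAt hd]; simpa

lemma log_lip {m a b : ℝ} (hm : 0 < m) (ha : m ≤ a) (hb : m ≤ b) :
    |Real.log a - Real.log b| ≤ |a - b| / m := by
  have key : ∀ a b : ℝ, m ≤ a → m ≤ b → Real.log a - Real.log b ≤ |a - b| / m := by
    intro a b ha hb
    have hb0 : 0 < b := hm.trans_le hb
    have ha0 : 0 < a := hm.trans_le ha
    rw [← Real.log_div ha0.ne' hb0.ne']
    refine (Real.log_le_sub_one_of_pos (by positivity)).trans ?_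
    rw [show a / b - 1 = (a - b)/b by field_simp]
    exact (div_le_div_of_nonneg_right (le_abs_self _) hb0.le).trans (by gcongr)
  rw [abs_le]
  constructor
  · have := key b a hb ha
    rw [abs_sub_comm] at this; linarith
  · exact key a b ha hb



lemma H_one_add {f : Euc d → ℝ} (hf : Continuous f) (hsf : HasCompactSupport f)
    (s : ℝ) (x : Euc d) : H (fun y => 1 + f y) s x = 1 + H f s x := by
  obtain ⟨C, h0, hC⟩ := decay hf hsf
  unfold H
  have hw : Integrable (w d) := by simpa using w_int_exp (d := d) 0
  simp only [smul_add]
  rw [integral_add (by simpa using hw) (H_integrable hf h0 hC s x)]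
  simp [w_integral]

lemma H_lower {f : Euc d → ℝ} (hf : Continuous f) (hsf : HasCompactSupport f) {m : ℝ}
    (hm : ∀ y, m ≤ 1 + f y)
    (s : ℝ) (x : Euc d) : m ≤ 1 + H f s x := by
  obtain ⟨C, h0, hC⟩ := decay hf hsf
  have hw : Integrable (w d) := by simpa using w_int_exp (d := d) 0
  rw [← H_one_add hf hsf]
  calc m = ∫ z, w d z * m := by rw [integral_mul_const, w_integral, one_mul]
    _ ≤ _ := by
      unfold H
      refine integral_mono (hw.mul_const m) ?_ fun z => ?_
      · have := hw.add (H_integrable hf h0 hC s x)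
        refine this.congr (Eventually.of_forall fun z => ?_)
        simp [mul_add]
      · exact mul_le_mul_of_nonneg_left (hm _) (w_nonneg z)

lemma V_fderiv {f : Euc d → ℝ} (hf : ContDiff ℝ 1 f) (hsf : HasCompactSupport f) {m : ℝ}
    (hm0 : 0 < m) (hm : ∀ y, m ≤ 1 + f y) (α s : ℝ) (x : Euc d) :
    HasFDerivAt (fun x => -α * Real.log (1 + H f s x))
      ((-α * (1 + H f s x)⁻¹) • H (fderiv ℝ f) s x) x := by
  have hpos := hm0.trans_le (H_lower hf.continuous hsf hm s x)
  have := (((H_fderiv hf hsf s x).const_add 1).log hpos.ne').const_mul (-α)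
  rwa [smul_smul] at this

lemma V_second {f : Euc d → ℝ} (hf : ContDiff ℝ 2 f) (hsf : HasCompactSupport f) {m : ℝ}
    (hm0 : 0 < m) (hm : ∀ y, m ≤ 1 + f y) (α s : ℝ) (x e : Euc d) :
    fderiv ℝ (fun y => fderiv ℝ (fun x => -α * Real.log (1 + H f s x)) y e) x e =
      -α * ((1 + H f s x)⁻¹ * H (fderiv ℝ (fun y => fderiv ℝ f y e)) s x e
        - (H (fderiv ℝ f) s x e) ^ 2 * ((1 + H f s x) ^ 2)⁻¹) := by
  have hf1 : ContDiff ℝ 1 f := hf.of_le (by norm_num)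
  have hpos := hm0.trans_le (H_lower hf.continuous hsf hm s x)
  have hD : ContDiff ℝ 1 (fderiv ℝ f) := hf.fderiv_right (by norm_num)
  have hDs : HasCompactSupport (fderiv ℝ f) := hsf.fderiv (𝕜 := ℝ)
  have hDe : ContDiff ℝ 1 (fun y => fderiv ℝ f y e) := hD.clm_apply contDiff_const
  have hDes : HasCompactSupport (fun y => fderiv ℝ f y e) :=
    hDs.comp_left (g := fun L : Euc d →L[ℝ] ℝ => L e) (by simp)
  have e1 : (fun y => fderiv ℝ (fun x => -α * Real.log (1 + H f s x)) y e) =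
      fun y => -α * ((1 + H f s y)⁻¹ * H (fun y => fderiv ℝ f y e) s y) := by
    funext y
    rw [(V_fderiv hf1 hsf hm0 hm α s y).fderiv, smul_apply, H_apply hD.continuous hDs,
      smul_eq_mul, mul_assoc]
  rw [e1]
  have h1 := ((H_fderiv hf1 hsf s x).const_add 1)
  have h2 : HasFDerivAt (fun y => (1 + H f s y)⁻¹)
      ((-((1 + H f s x) ^ 2)⁻¹) • H (fderiv ℝ f) s x) x :=
    (hasDerivAt_inv hpos.ne').comp_hasFDerivAt x h1
  have h3 := ((h2.mul (H_fderiv hDe hDes s x)).const_mul (-α))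
  have h4 := h3.fderiv
  simp only [Pi.mul_def] at h4
  rw [h4, H_apply hD.continuous hDs]
  simp only [add_apply, smul_apply, smul_eq_mul]
  rw [H_apply hD.continuous hDs]
  ring

lemma norm_gradient (f : Euc d → ℝ) (x : Euc d) : ‖gradient f x‖ = ‖fderiv ℝ f x‖ := by
  unfold gradient
  exact LinearIsometryEquiv.norm_map _ _

end CH

theorem statement8 (d : ℕ) (hd : 1 ≤ d) (α : ℝ) (hα : 0 < α)
    (φ : Euc d → ℝ) (hφ : ContDiff ℝ (⊤ : ℕ∞) φ) (hsupp : HasCompactSupport φ)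
    (T : ℝ) (hT : 0 < T) :
    ∃ C > (0 : ℝ), ∀ t ∈ Set.Icc (0 : ℝ) T, ∀ x : Euc d,
      |coleHopf d α t φ x| + |derivWithin (fun s => coleHopf d α s φ x) (Set.Ici 0) t|
        + |lap d (coleHopf d α t φ) x| + ‖gradient (coleHopf d α t φ) x‖ ^ 2
      ≤ C * Real.exp (-‖x‖) := by
  obtain ⟨M, hM⟩ := hsupp.exists_bound_of_continuous hφ.continuous
  have hM0 : 0 ≤ M := (norm_nonneg _).trans (hM 0)
  set ψ : Euc d → ℝ := fun y => Real.exp (-φ y / α) - 1 with hψdef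
  have hψ : ContDiff ℝ 2 ψ := by
    have h2 : ContDiff ℝ 2 φ := hφ.of_le (by
      have : ((2 : ℕ∞) : WithTop ℕ∞) ≤ ((⊤ : ℕ∞) : WithTop ℕ∞) := WithTop.coe_le_coe.2 le_top
      exact this)
    exact ((h2.neg.div_const α).exp).sub contDiff_const
  have hψ1 : ContDiff ℝ 1 ψ := hψ.of_le (by norm_num)
  have hψs : HasCompactSupport ψ :=
    hsupp.comp_left (g := fun r => Real.exp (-r / α) - 1) (by simp)
  set m := Real.exp (-M / α) with hmdef
  have hm0 : 0 < m := Real.exp_pos _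
  have hm1 : m ≤ 1 := by
    rw [hmdef, Real.exp_le_one_iff]
    exact div_nonpos_of_nonpos_of_nonneg (by linarith) hα.le
  have hm : ∀ y, m ≤ 1 + ψ y := by
    intro y
    simp only [hψdef, add_sub_cancel, hmdef]
    gcongr
    exact (le_abs_self _).trans (hM y)
  have hlow := fun s x => CH.H_lower hψ.continuous hψs hm s x
  have hV : ∀ t, 0 ≤ t → ∀ x, coleHopf d α t φ x =
      -α * Real.log (1 + CH.H ψ (√(α * t)) x) := by
    intro t ht x
    unfold coleHopf
    rw [CH.heatP_eq hα ht, ← CH.H_one_add hψ.continuous hψs]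
    simp [hψdef]
  set S := √(α * (T + 1)) with hS
  have hD : ContDiff ℝ 1 (fderiv ℝ ψ) := hψ.fderiv_right (by norm_num)
  have hDs : HasCompactSupport (fderiv ℝ ψ) := hψs.fderiv (𝕜 := ℝ)
  have hDe : ∀ e, ContDiff ℝ 1 (fun y => fderiv ℝ ψ y e) := fun e => hD.clm_apply contDiff_const
  have hDes : ∀ e, HasCompactSupport (fun y => fderiv ℝ ψ y e) := fun e =>
    hDs.comp_left (g := fun L : Euc d →L[ℝ] ℝ => L e) (by simp)
  obtain ⟨C0, hC00, hC0⟩ := CH.H_bound' hψ.continuous hψs S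
  obtain ⟨C1, hC10, hC1⟩ := CH.H_bound' hD.continuous hDs S
  obtain ⟨Ct, hCt0, hCt⟩ := CH.H_lip hψ hψs S
  have h2 := fun i : Fin d => CH.H_bound' ((hDe (EuclideanSpace.single i 1)).continuous_fderiv
    (by norm_num)) ((hDes (EuclideanSpace.single i 1)).fderiv (𝕜 := ℝ)) S
  choose C2 hC20 hC2 using h2
  refine ⟨α * C0 / m + α * (Ct * α) / m + (∑ i, α * (C2 i / m + C1 ^ 2 / m ^ 2))
    + (α * C1 / m) ^ 2 + 1, ?_, ?_⟩
  · have : 0 ≤ ∑ i, α * (C2 i / m + C1 ^ 2 / m ^ 2) := Finset.sum_nonneg fun i _ => by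
      have := hC20 i
      positivity
    positivity
  intro t ht x
  have hE0 := Real.exp_pos (-‖x‖)
  have hE1 : Real.exp (-‖x‖) ≤ 1 := by simp
  set E := Real.exp (-‖x‖) with hE
  have hEE : E ^ 2 ≤ E := by nlinarith
  have hsS : ∀ t, t ≤ T + 1 → |√(α * t)| ≤ S := by
    intro t ht
    rw [abs_of_nonneg (Real.sqrt_nonneg _)]
    exact Real.sqrt_le_sqrt (by gcongr)
  have hs := hsS t (by linarith [ht.2])
  have hVf : coleHopf d α t φ = fun x => -α * Real.log (1 + CH.H ψ (√(α * t)) x) :=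
    funext fun x => hV t ht.1 x
  have hinv : ∀ x, (1 + CH.H ψ (√(α * t)) x)⁻¹ ≤ m⁻¹ := fun x => inv_anti₀ hm0 (hlow _ x)
  have hinv0 : ∀ x, 0 < (1 + CH.H ψ (√(α * t)) x)⁻¹ := fun x =>
    inv_pos.2 (hm0.trans_le (hlow _ x))
  -- value
  have b0 : |coleHopf d α t φ x| ≤ α * C0 / m * E := by
    rw [hV t ht.1, abs_mul, abs_neg, abs_of_pos hα]
    have h1 := CH.log_lip hm0 (hlow (√(α * t)) x) hm1
    rw [Real.log_one, sub_zero, add_sub_cancel_left] at h1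
    have h3 := hC0 _ hs x
    rw [Real.norm_eq_abs] at h3
    calc _ ≤ α * (C0 * E / m) := by
          gcongr
          exact h1.trans (by gcongr)
      _ = _ := by ring
  -- time derivative
  have bt : |derivWithin (fun s => coleHopf d α s φ x) (Set.Ici 0) t| ≤
      α * (Ct * α) / m * E := by
    refine CH.derivWithin_bound (δ := 1) one_pos ?_ ht.1
    have key : ∀ a b, 0 ≤ a → a ≤ b → b ≤ T + 1 →
        |CH.H ψ (√(α * b)) x - CH.H ψ (√(α * a)) x| ≤ Ct * E * (α * (b - a)) := by
      intro a b ha hab hb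
      have := hCt (√(α * a)) (√(α * b)) (Real.sqrt_nonneg _)
        (Real.sqrt_le_sqrt (by gcongr)) ((le_abs_self _).trans (hsS b hb)) x
      rw [Real.sq_sqrt (mul_nonneg hα.le (ha.trans hab)), Real.sq_sqrt (mul_nonneg hα.le ha)] at this
      rwa [← mul_sub] at this
    intro s hs0 hst
    have hs0' : 0 ≤ s := hs0
    have key2 : |CH.H ψ (√(α * s)) x - CH.H ψ (√(α * t)) x| ≤ Ct * E * (α * |s - t|) := by
      rcases le_total s t with h | h
      · rw [abs_sub_comm, abs_sub_comm s t, abs_of_nonneg (sub_nonneg.2 h)]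
        exact key s t hs0' h (by linarith [ht.2])
      · rw [abs_of_nonneg (sub_nonneg.2 h)]
        exact key t s ht.1 h (by linarith [ht.2])
    rw [hV t ht.1, hV s hs0', ← mul_sub, abs_mul, abs_neg, abs_of_pos hα]
    have h1 := CH.log_lip hm0 (hlow (√(α * s)) x) (hlow (√(α * t)) x)
    rw [add_sub_add_left_eq_sub] at h1
    calc _ ≤ α * (Ct * E * (α * |s - t|) / m) := by
          gcongr
          exact h1.trans (by gcongr)
      _ = _ := by ring
  -- gradient
  have h1 := hC1 _ hs x
  have bg : ‖gradient (coleHopf d α t φ) x‖ ^ 2 ≤ (α * C1 / m) ^ 2 * E := by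
    rw [CH.norm_gradient, hVf, (CH.V_fderiv hψ1 hψs hm0 hm α _ x).fderiv, norm_smul, norm_mul,
      norm_neg, Real.norm_of_nonneg hα.le, Real.norm_of_nonneg (hinv0 x).le]
    have hi := hinv x
    have hi0 := hinv0 x
    calc _ ≤ (α * m⁻¹ * (C1 * E)) ^ 2 := by gcongr
      _ = (α * C1 / m) ^ 2 * E ^ 2 := by ring
      _ ≤ _ := by gcongr
  have bl : |lap d (coleHopf d α t φ) x| ≤ (∑ i, α * (C2 i / m + C1 ^ 2 / m ^ 2)) * E := by
    unfold lap
    rw [Finset.sum_mul]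
    refine (Finset.abs_sum_le_sum_abs _ _).trans (Finset.sum_le_sum fun i _ => ?_)
    rw [hVf, CH.V_second hψ hψs hm0 hm α _ x]
    have hi := hinv x
    have hi0 := hinv0 x
    have hn : ‖(EuclideanSpace.single i 1 : Euc d)‖ = 1 := by simp
    have p1 : |CH.H (fderiv ℝ ψ) (√(α * t)) x (EuclideanSpace.single i 1)| ≤ C1 * E := by
      rw [← Real.norm_eq_abs]
      refine (ContinuousLinearMap.le_opNorm _ _).trans ?_
      rwa [hn, mul_one]
    have p2 : |CH.H (fderiv ℝ (fun y => fderiv ℝ ψ y (EuclideanSpace.single i 1))) (√(α * t)) x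
        (EuclideanSpace.single i 1)| ≤ C2 i * E := by
      rw [← Real.norm_eq_abs]
      refine (ContinuousLinearMap.le_opNorm _ _).trans ?_
      rw [hn, mul_one]
      exact hC2 i _ hs x
    rw [abs_mul, abs_neg, abs_of_pos hα, mul_assoc]
    refine mul_le_mul_of_nonneg_left ?_ hα.le
    refine (abs_sub _ _).trans ?_
    rw [abs_mul, abs_mul, abs_of_pos hi0, ← inv_pow, abs_pow, abs_pow, abs_of_pos hi0]
    calc _ ≤ m⁻¹ * (C2 i * E) + (C1 * E) ^ 2 * m⁻¹ ^ 2 := by gcongr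
      _ = C2 i / m * E + C1 ^ 2 / m ^ 2 * E ^ 2 := by
        rw [inv_pow]; ring
      _ ≤ C2 i / m * E + C1 ^ 2 / m ^ 2 * E := by gcongr
      _ = _ := by ring
  nlinarith
end
end
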